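/- arXiv:1606.01577 — 2 statements merged into one kernel-verified Lean document; each statement's English description precedes it below -/
import Mathlib

section
/- Octopus inequality for the complete graph with unit conductances: let $V$ be a finite set, $x\in V$, $n=|V|\geq 2$, $\nu$ the uniform measure on $S_V$. Then for any $f:S_V\to\mathbb{R}$, $\sum_{y\neq x}\nu[(f(\eta\tau_{xy})-f(\eta))^2] \geq \frac{1}{n-1}\sum_{\{y,z\}\subseteq V\setminus\{x\}}\nu[(f(\eta\tau_{yz})-f(\eta))^2]$. -/
open Finset

noncomputable section

def permExp {V : Type*} [Fintype V] [DecidableEq V] (g : Equiv.Perm V → ℝ) : ℝ :=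
  (∑ η : Equiv.Perm V, g η) / (Fintype.card (Equiv.Perm V))

open Equiv (Perm swap)

/-- The class of `k` under conjugation by the stabilizer of `0`: the values `0, …, 5` stand for the
identity, the three-cycles moving `0`, the double transpositions moving `0`, the three-cycles fixing
`0`, the double transpositions fixing `0`, and the five-cycles moving `0`. -/
def cycleClass {n : ℕ} [NeZero n] (k : Perm (Fin n)) : ℕ :=
  let a := (k 0).val
  let moved := (List.finRange n).foldr (fun i s => bif Nat.beq (k i).val i.val then s else s + 1) 0
  bif Nat.beq moved 0 then 0
  else bif Nat.beq moved 3 then (bif Nat.beq a 0 then 3 else 1)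
  else bif Nat.beq moved 4 then
    (bif Nat.beq a 0 then (bif Nat.beq (k (k 1)).val (Fin.val (n := n) 1) then 4 else 6)
    else (bif Nat.beq (k (k 0)).val 0 then 2 else 6))
  else bif Nat.beq moved 5 then
    (bif Nat.beq (k (k 0)).val 0 || Nat.beq (k (k (k 0))).val 0 then 6 else 5)
  else 6

/-- An expression of `k` as a product of transpositions, in the form belonging to class `t`. -/
def classRep {n : ℕ} [NeZero n] (t : ℕ) (k : Perm (Fin n)) : Prop :=
  match t with
  | 0 => k = 1
  | 1 => k 0 ≠ 0 ∧ k (k 0) ≠ 0 ∧ k (k 0) ≠ k 0 ∧ k = swap 0 (k (k 0)) * swap 0 (k 0)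
  | 2 => ∃ i, k 0 ≠ 0 ∧ i ≠ 0 ∧ k i ≠ 0 ∧ i ≠ k 0 ∧ k i ≠ k 0 ∧ k i ≠ i ∧
      k = swap 0 (k 0) * swap i (k i)
  | 3 => ∃ i, i ≠ 0 ∧ k i ≠ 0 ∧ k (k i) ≠ 0 ∧ k i ≠ i ∧ k (k i) ≠ i ∧ k (k i) ≠ k i ∧
      k = swap i (k (k i)) * swap i (k i)
  | 4 => ∃ i j, i ≠ 0 ∧ j ≠ 0 ∧ k i ≠ 0 ∧ k j ≠ 0 ∧ i ≠ j ∧ k i ≠ i ∧ k j ≠ j ∧ k i ≠ j ∧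
      k j ≠ i ∧ k i ≠ k j ∧ k = swap i (k i) * swap j (k j)
  | 5 => k 0 ≠ 0 ∧ k (k 0) ≠ 0 ∧ k (k (k 0)) ≠ 0 ∧ k (k (k (k 0))) ≠ 0 ∧ k (k 0) ≠ k 0 ∧
      k (k (k 0)) ≠ k 0 ∧ k (k (k (k 0))) ≠ k 0 ∧ k (k (k 0)) ≠ k (k 0) ∧
      k (k (k (k 0))) ≠ k (k 0) ∧ k (k (k (k 0))) ≠ k (k (k 0)) ∧
      k = swap 0 (k (k (k (k 0)))) * swap 0 (k (k (k 0))) * swap 0 (k (k 0)) * swap 0 (k 0)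
  | _ => True

instance {n : ℕ} [NeZero n] (t : ℕ) (k : Perm (Fin n)) : Decidable (classRep t k) := by
  unfold classRep
  split <;> infer_instance

set_option maxRecDepth 10000 in
lemma classRep_cycleClass_four : ∀ k : Perm (Fin 4), classRep (cycleClass k) k := by
  decide +kernel

set_option maxRecDepth 10000 in
lemma classRep_cycleClass_five : ∀ k : Perm (Fin 5), classRep (cycleClass k) k := by
  decide +kernel

/-- The pairwise quotients of a formal combination, with the products of the coefficients. -/
def quotients {n : ℕ} (L : List (ℤ × Perm (Fin n))) : List (ℤ × Perm (Fin n)) :=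
  L.flatMap fun p => L.map fun q => (p.1 * q.1, p.2⁻¹ * q.2)

/-- The sum of the coefficients of a formal combination over the class `t`. -/
def classSum {n : ℕ} [NeZero n] (L : List (ℤ × Perm (Fin n))) (t : ℕ) : ℤ :=
  ((L.filter fun p => cycleClass p.2 = t).map Prod.fst).sum

/-- The difference of the Klein four-group and one of its cosets. -/
def fourPointVector : List (ℤ × Perm (Fin 4)) :=
  let K : List (Perm (Fin 4)) := [1, swap 0 1 * swap 2 3, swap 0 2 * swap 1 3, swap 0 3 * swap 1 2]
  K.map (fun k => (1, k)) ++ K.map (fun k => (-1, swap 1 2 * swap 2 3 * k))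

/-- A formal combination of even permutations of five points, invariant under conjugation by the
stabilizer of `0`. -/
def fivePointVector : List (ℤ × Perm (Fin 5)) :=
  [(3, 1)] ++
  ([(1, 2), (1, 3), (1, 4), (2, 1), (2, 3), (2, 4), (3, 1), (3, 2), (3, 4), (4, 1), (4, 2),
    (4, 3)] : List (Fin 5 × Fin 5)).map (fun p => (-1, swap 0 p.1 * swap 0 p.2)) ++
  ([(1, 2, 3), (1, 2, 4), (1, 3, 4), (2, 1, 3), (2, 1, 4), (2, 3, 4), (3, 1, 2), (3, 1, 4),
    (3, 2, 4), (4, 1, 2), (4, 1, 3), (4, 2, 3)] : List (Fin 5 × Fin 5 × Fin 5)).map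
      (fun p => (1, swap 0 p.1 * swap p.2.1 p.2.2)) ++
  [(-1, swap 1 2 * swap 3 4), (-1, swap 1 3 * swap 2 4), (-1, swap 1 4 * swap 2 3)]

set_option maxRecDepth 100000 in
lemma classSum_fourPointVector : (List.range 7).map (classSum (quotients fourPointVector)) =
    [8, -24, 24, -8, 0, 0, 0] := by
  decide +kernel

set_option maxRecDepth 100000 in
lemma cycleClass_fourPointVector : ∀ p ∈ quotients fourPointVector, cycleClass p.2 < 6 := by
  decide +kernel

set_option maxRecDepth 100000 in
lemma classSum_fivePointVector : (List.range 7).map (classSum (quotients fivePointVector)) =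
    [36, -144, 144, 0, -36, 0, 0] := by
  decide +kernel

set_option maxRecDepth 100000 in
lemma cycleClass_fivePointVector : ∀ p ∈ quotients fivePointVector, cycleClass p.2 < 6 := by
  decide +kernel

section ListSums

variable {G : Type*}

lemma sum_mul_comp_eq_sum_fiber (L : List (ℤ × G)) (c : G → ℕ) (N : ℕ)
    (hc : ∀ p ∈ L, c p.2 < N) (F : G → ℝ) (val : ℕ → ℝ) (hF : ∀ p ∈ L, F p.2 = val (c p.2)) :
    (L.map fun p => (p.1 : ℝ) * F p.2).sum =
      ∑ t ∈ range N, ((((L.filter fun p => c p.2 = t).map Prod.fst).sum : ℤ) : ℝ) * val t := by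
  induction L with
  | nil => simp
  | cons p L ih =>
    have h1 := ih (fun q hq => hc q (by simp [hq])) (fun q hq => hF q (by simp [hq]))
    have h2 : ∀ t, (((((p :: L).filter fun p => c p.2 = t).map Prod.fst).sum : ℤ) : ℝ) =
        (if c p.2 = t then (p.1 : ℝ) else 0) +
          ((((L.filter fun p => c p.2 = t).map Prod.fst).sum : ℤ) : ℝ) := by
      intro t
      by_cases h : c p.2 = t <;> simp [h]
    simp only [h2, add_mul, sum_add_distrib, List.map_cons, List.sum_cons, h1]
    rw [hF p (by simp)]
    simp [ite_mul, hc p (by simp)]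

lemma sum_flatMap_map {α : Type*} (L : List α) (L' : List α) (F : α → α → ℝ) :
    (L.flatMap fun p => L'.map fun q => F p q).sum =
      (L.map fun p => (L'.map fun q => F p q).sum).sum := by
  induction L with
  | nil => simp
  | cons p L ih => simp [ih]

end ListSums

section SumsOverDistinctPoints

variable {V : Type*} [DecidableEq V]

lemma sum_eq_one_special {s : Finset V} {a : V} (ha : a ∈ s) {F : V → ℝ} {A : ℝ}
    (h : ∀ b ∈ s, b ≠ a → F b = A) : ∑ b ∈ s, F b = F a + ((#s : ℝ) - 1) * A := by
  rw [← add_sum_erase _ _ ha, sum_congr rfl (g := fun _ => A), sum_const, nsmul_eq_mul,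
    cast_card_erase_of_mem ha]
  intro b hb
  exact h b (mem_of_mem_erase hb) (ne_of_mem_erase hb)

lemma sum_eq_two_special {s : Finset V} {a b : V} (ha : a ∈ s) (hb : b ∈ s) (hab : a ≠ b)
    {F : V → ℝ} {A : ℝ} (h : ∀ c ∈ s, c ≠ a → c ≠ b → F c = A) :
    ∑ c ∈ s, F c = F a + F b + ((#s : ℝ) - 2) * A := by
  rw [← add_sum_erase _ _ ha, sum_eq_one_special (mem_erase.2 ⟨hab.symm, hb⟩) (A := A),
    cast_card_erase_of_mem ha]
  · ring
  · intro c hc hcb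
    exact h c (mem_of_mem_erase hc) (ne_of_mem_erase hc) hcb

lemma sum_erase_const {s : Finset V} {F : V → V → ℝ} {A : ℝ}
    (h : ∀ a ∈ s, ∀ b ∈ s, a ≠ b → F a b = A) :
    ∑ a ∈ s, ∑ b ∈ s.erase a, F a b = (#s : ℝ) * ((#s : ℝ) - 1) * A := by
  have : ∀ a ∈ s, ∑ b ∈ s.erase a, F a b = ((#s : ℝ) - 1) * A := by
    intro a ha
    rw [sum_congr rfl (g := fun _ => A), sum_const, nsmul_eq_mul, cast_card_erase_of_mem ha]
    intro b hb
    exact h a ha b (mem_of_mem_erase hb) (ne_of_mem_erase hb).symm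
  rw [sum_congr rfl this, sum_const, nsmul_eq_mul]
  ring

lemma sum_erase_eq_one_special {s : Finset V} {a : V} (ha : a ∈ s) {F : V → V → ℝ} {A B : ℝ}
    (h₁ : ∀ b ∈ s, b ≠ a → F a b = A) (h₂ : ∀ b ∈ s, b ≠ a → F b a = A)
    (h₃ : ∀ b ∈ s, ∀ c ∈ s, b ≠ a → c ≠ a → b ≠ c → F b c = B) :
    ∑ b ∈ s, ∑ c ∈ s.erase b, F b c =
      2 * ((#s : ℝ) - 1) * A + ((#s : ℝ) - 1) * ((#s : ℝ) - 2) * B := by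
  rw [sum_eq_one_special ha (A := A + ((#s : ℝ) - 2) * B)]
  · rw [sum_congr rfl (g := fun _ => A), sum_const, nsmul_eq_mul, cast_card_erase_of_mem ha]
    · ring
    · intro b hb
      exact h₁ b (mem_of_mem_erase hb) (ne_of_mem_erase hb)
  · intro b hb hba
    rw [sum_eq_one_special (mem_erase.2 ⟨hba.symm, ha⟩) (A := B), h₂ b hb hba,
      cast_card_erase_of_mem hb]
    · ring
    · intro c hc hca
      exact h₃ b hb c (mem_of_mem_erase hc) hba hca (ne_of_mem_erase hc).symm

lemma sum_erase_eq_two_special {s : Finset V} {a b : V} (ha : a ∈ s) (hb : b ∈ s) (hab : a ≠ b)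
    {F : V → V → ℝ} {E C D : ℝ} (hE : F a b = E) (hE' : F b a = E)
    (hC : ∀ c ∈ s, c ≠ a → c ≠ b → F a c = C ∧ F b c = C ∧ F c a = C ∧ F c b = C)
    (hD : ∀ c ∈ s, ∀ d ∈ s, c ≠ a → c ≠ b → d ≠ a → d ≠ b → c ≠ d → F c d = D) :
    ∑ c ∈ s, ∑ d ∈ s.erase c, F c d =
      2 * E + 4 * ((#s : ℝ) - 2) * C + ((#s : ℝ) - 2) * ((#s : ℝ) - 3) * D := by
  rw [sum_eq_two_special ha hb hab (A := 2 * C + ((#s : ℝ) - 3) * D),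
    sum_eq_one_special (mem_erase.2 ⟨hab.symm, hb⟩) (A := C),
    sum_eq_one_special (mem_erase.2 ⟨hab, ha⟩) (A := C), hE, hE',
    cast_card_erase_of_mem ha, cast_card_erase_of_mem hb]
  · ring
  · intro c hc hca
    exact (hC c (mem_of_mem_erase hc) hca (ne_of_mem_erase hc)).2.1
  · intro c hc hcb
    exact (hC c (mem_of_mem_erase hc) (ne_of_mem_erase hc) hcb).1
  · intro c hc hca hcb
    obtain ⟨-, -, h1, h2⟩ := hC c hc hca hcb
    rw [sum_eq_two_special (mem_erase.2 ⟨hca.symm, ha⟩) (mem_erase.2 ⟨hcb.symm, hb⟩) hab (A := D),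
      h1, h2, cast_card_erase_of_mem hc]
    · ring
    · intro d hd hda hdb
      exact hD c hc d (mem_of_mem_erase hd) hca hcb hda hdb (ne_of_mem_erase hd).symm

end SumsOverDistinctPoints

section Autocorrelation

variable {V : Type*} [Fintype V] [DecidableEq V]

/-- The autocorrelation function of `f` on the symmetric group, averaged (without normalization)
over conjugation by the stabilizer of `x`. -/
def autocorr (x : V) (f : Perm V → ℝ) (g : Perm V) : ℝ :=
  ∑ σ : Perm V with σ x = x, ∑ η : Perm V, f (η * σ) * f (η * g * σ)

lemma sum_autocorr_nonneg (x : V) (f : Perm V → ℝ) {ι : Type*} [Fintype ι] (u : ι → ℝ)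
    (g : ι → Perm V) : 0 ≤ ∑ i, ∑ j, u i * u j * autocorr x f ((g i)⁻¹ * g j) := by
  have shift : ∀ i j, autocorr x f ((g i)⁻¹ * g j) =
      ∑ σ : Perm V with σ x = x, ∑ η : Perm V, f (η * g i * σ) * f (η * g j * σ) := by
    intro i j
    refine sum_congr rfl fun σ _ => ?_
    rw [← Equiv.sum_comp (Equiv.mulRight (g i))]
    simp [mul_assoc]
  have : ∑ i, ∑ j, u i * u j * autocorr x f ((g i)⁻¹ * g j) =
      ∑ σ : Perm V with σ x = x, ∑ η : Perm V, (∑ i, u i * f (η * g i * σ)) ^ 2 := by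
    simp only [shift, mul_sum]
    simp_rw [sum_comm (s := (univ : Finset ι)) (t := univ.filter _),
      sum_comm (s := (univ : Finset ι)) (t := (univ : Finset (Perm V)))]
    refine sum_congr rfl fun σ _ => sum_congr rfl fun η _ => ?_
    rw [sq, sum_mul_sum]
    exact sum_congr rfl fun i _ => sum_congr rfl fun j _ => by ring
  rw [this]
  positivity

lemma autocorr_inv (x : V) (f : Perm V → ℝ) (g : Perm V) :
    autocorr x f g⁻¹ = autocorr x f g := by
  refine sum_congr rfl fun σ _ => ?_
  rw [← Equiv.sum_comp (Equiv.mulRight g)]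
  simp [mul_comm]

lemma autocorr_eq_sum_conj (x : V) (f : Perm V → ℝ) (g : Perm V) :
    autocorr x f g =
      ∑ σ : Perm V with σ x = x, ∑ η : Perm V, f η * f (η * (σ⁻¹ * g * σ)) := by
  refine sum_congr rfl fun σ _ => ?_
  rw [← Equiv.sum_comp (Equiv.mulRight σ⁻¹)]
  simp [mul_assoc]

lemma autocorr_conj (x : V) (f : Perm V → ℝ) (g : Perm V) {τ : Perm V} (hτ : τ x = x) :
    autocorr x f (τ * g * τ⁻¹) = autocorr x f g := by
  have hτ' : Equiv.symm τ x = x := by rw [Equiv.symm_apply_eq, hτ]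
  simp only [autocorr_eq_sum_conj]
  refine sum_bij' (fun σ _ => τ⁻¹ * σ) (fun σ _ => τ * σ) ?_ ?_ ?_ ?_ ?_ <;>
    simp +contextual [hτ, hτ', mul_assoc]

end Autocorrelation

section Embeddings

variable {V : Type*}

lemma viaEmbeddingHom_conj {n : ℕ} (e : Fin n ↪ V) (σ : Perm V) (k : Perm (Fin n)) :
    Equiv.Perm.viaEmbeddingHom (σ • e) k = σ * Equiv.Perm.viaEmbeddingHom e k * σ⁻¹ := by
  ext v
  simp only [Equiv.Perm.viaEmbeddingHom_apply, Equiv.Perm.mul_apply]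
  by_cases hv : v ∈ Set.range (σ • e)
  · obtain ⟨i, rfl⟩ := hv
    rw [Equiv.Perm.viaEmbedding_apply]
    simp [Function.Embedding.smul_apply, Equiv.Perm.viaEmbedding_apply]
  · rw [Equiv.Perm.viaEmbedding_apply_of_notMem _ _ _ hv,
      Equiv.Perm.viaEmbedding_apply_of_notMem]
    · simp
    · rintro ⟨i, hi⟩
      exact hv ⟨i, by simp [Function.Embedding.smul_apply, hi]⟩

variable [DecidableEq V]

lemma viaEmbeddingHom_swap {n : ℕ} (e : Fin n ↪ V) (i j : Fin n) :
    Equiv.Perm.viaEmbeddingHom e (swap i j) = swap (e i) (e j) := by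
  ext v
  rw [Equiv.Perm.viaEmbeddingHom_apply]
  by_cases hv : v ∈ Set.range e
  · obtain ⟨k, rfl⟩ := hv
    rw [Equiv.Perm.viaEmbedding_apply, e.injective.swap_apply]
  · rw [Equiv.Perm.viaEmbedding_apply_of_notMem _ _ _ hv, Equiv.swap_apply_of_ne_of_ne] <;>
      rintro rfl <;> simp at hv

/-- The values of an autocorrelation function on products of transpositions, by conjugacy class
under the stabilizer of `x`. -/
structure ClassValues (x : V) (Φ : Perm V → ℝ) where
  (p q A B C D F : ℝ)
  hp : ∀ a, a ≠ x → Φ (swap x a) = p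
  hq : ∀ a b, a ≠ x → b ≠ x → a ≠ b → Φ (swap a b) = q
  hA : ∀ a b, a ≠ x → b ≠ x → a ≠ b → Φ (swap x a * swap x b) = A
  hB : ∀ a b c, a ≠ x → b ≠ x → c ≠ x → a ≠ b → a ≠ c → b ≠ c → Φ (swap x a * swap b c) = B
  hC : ∀ a b c, a ≠ x → b ≠ x → c ≠ x → a ≠ b → a ≠ c → b ≠ c → Φ (swap a b * swap a c) = C
  hD : ∀ a b c d, a ≠ x → b ≠ x → c ≠ x → d ≠ x → a ≠ b → a ≠ c → a ≠ d → b ≠ c → b ≠ d →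
    c ≠ d → Φ (swap a b * swap c d) = D
  hF : ∀ a b c d, a ≠ x → b ≠ x → c ≠ x → d ≠ x → a ≠ b → a ≠ c → a ≠ d → b ≠ c → b ≠ d →
    c ≠ d → Φ (swap x a * swap x b * swap x c * swap x d) = F

/-- The value on the class with a given `cycleClass`. -/
def ClassValues.val {x : V} {Φ : Perm V → ℝ} (v : ClassValues x Φ) : ℕ → ℝ
  | 0 => Φ 1
  | 1 => v.A
  | 2 => v.B
  | 3 => v.C
  | 4 => v.D
  | _ => v.F

lemma ClassValues.apply_viaEmbeddingHom {x : V} {Φ : Perm V → ℝ} (v : ClassValues x Φ) {n : ℕ}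
    [NeZero n] {e : Fin n ↪ V} (he : e 0 = x) {k : Perm (Fin n)} {t : ℕ} (ht : t < 6)
    (h : classRep t k) : Φ (Equiv.Perm.viaEmbeddingHom e k) = v.val t := by
  have hne : ∀ i, i ≠ 0 → e i ≠ x := fun i hi h => hi (e.injective (h.trans he.symm))
  have hne' : ∀ i j, i ≠ j → e i ≠ e j := fun i j hij h => hij (e.injective h)
  interval_cases t
  · obtain rfl : k = 1 := h
    rw [map_one]
    rfl
  · obtain ⟨h1, h2, h3, h4⟩ := h
    rw [h4, map_mul, viaEmbeddingHom_swap, viaEmbeddingHom_swap, he]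
    apply v.hA <;> first
      | exact hne _ (by assumption)
      | exact hne' _ _ (by assumption)
  · obtain ⟨i, h1, h2, h3, h4, h5, h6, h7⟩ := h
    rw [h7, map_mul, viaEmbeddingHom_swap, viaEmbeddingHom_swap, he]
    apply v.hB <;> first
      | exact hne _ (by assumption)
      | exact hne' _ _ (by assumption)
      | exact (hne' _ _ (by assumption)).symm
  · obtain ⟨i, h1, h2, h3, h4, h5, h6, h7⟩ := h
    rw [h7, map_mul, viaEmbeddingHom_swap, viaEmbeddingHom_swap]
    apply v.hC <;> first
      | exact hne _ (by assumption)
      | exact hne' _ _ (by assumption)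
      | exact (hne' _ _ (by assumption)).symm
  · obtain ⟨i, j, h1, h2, h3, h4, h5, h6, h7, h8, h9, h10, h11⟩ := h
    rw [h11, map_mul, viaEmbeddingHom_swap, viaEmbeddingHom_swap]
    apply v.hD <;> first
      | exact hne _ (by assumption)
      | exact hne' _ _ (by assumption)
      | exact (hne' _ _ (by assumption)).symm
  · obtain ⟨h1, h2, h3, h4, h5, h6, h7, h8, h9, h10, h11⟩ := h
    rw [h11]
    simp only [map_mul, viaEmbeddingHom_swap, he]
    apply v.hF <;> first
      | exact hne _ (by assumption)
      | exact hne' _ _ (by assumption)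

variable [Fintype V]

lemma autocorr_viaEmbeddingHom_eq (x : V) (f : Perm V → ℝ) {n : ℕ} [NeZero n] {e e' : Fin n ↪ V}
    (he : e 0 = x) (he' : e' 0 = x) (k : Perm (Fin n)) :
    autocorr x f (Equiv.Perm.viaEmbeddingHom e k) =
      autocorr x f (Equiv.Perm.viaEmbeddingHom e' k) := by
  obtain ⟨σ, rfl⟩ := (MulAction.isMultiplyPretransitive_iff (G := Perm V) (α := V)).1
    (Equiv.Perm.isMultiplyPretransitive V n) e e'
  rw [viaEmbeddingHom_conj, autocorr_conj]
  simpa [Function.Embedding.smul_apply, he] using he'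

lemma exists_autocorr_viaEmbeddingHom_eq (x : V) (f : Perm V → ℝ) {n : ℕ} [NeZero n]
    (k : Perm (Fin n)) :
    ∃ A, ∀ e : Fin n ↪ V, e 0 = x → autocorr x f (Equiv.Perm.viaEmbeddingHom e k) = A := by
  by_cases h : ∃ e : Fin n ↪ V, e 0 = x
  · obtain ⟨e, he⟩ := h
    exact ⟨_, fun e' he' => autocorr_viaEmbeddingHom_eq x f he' he k⟩
  · exact ⟨0, fun e he => (h ⟨e, he⟩).elim⟩

lemma exists_embedding_apply_zero (x : V) {n : ℕ} [NeZero n] (h : n ≤ Fintype.card V) :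
    ∃ e : Fin n ↪ V, e 0 = x := by
  obtain ⟨e⟩ := Function.Embedding.nonempty_of_card_le (α := Fin n) (β := V) (by simpa using h)
  exact ⟨e.trans (swap (e 0) x).toEmbedding, by simp⟩

lemma nonempty_classValues (x : V) (f : Perm V → ℝ) :
    Nonempty (ClassValues x (autocorr x f)) := by
  have inj2 : ∀ a, a ≠ x → Function.Injective ![x, a] := by
    intro a h1 i j
    fin_cases i <;> fin_cases j <;> simp [h1, h1.symm]
  have inj3 : ∀ a b, a ≠ x → b ≠ x → a ≠ b → Function.Injective ![x, a, b] := by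
    intro a b h1 h2 h3 i j
    fin_cases i <;> fin_cases j <;> simp [h1, h1.symm, h2, h2.symm, h3, h3.symm]
  have inj4 : ∀ a b c, a ≠ x → b ≠ x → c ≠ x → a ≠ b → a ≠ c → b ≠ c →
      Function.Injective ![x, a, b, c] := by
    intro a b c h1 h2 h3 h4 h5 h6 i j
    fin_cases i <;> fin_cases j <;> simp [h1, h1.symm, h2, h2.symm, h3, h3.symm, h4, h4.symm,
      h5, h5.symm, h6, h6.symm]
  have inj5 : ∀ a b c d, a ≠ x → b ≠ x → c ≠ x → d ≠ x → a ≠ b → a ≠ c → a ≠ d → b ≠ c → b ≠ d →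
      c ≠ d → Function.Injective ![x, a, b, c, d] := by
    intro a b c d h1 h2 h3 h4 h5 h6 h7 h8 h9 h10 i j
    fin_cases i <;> fin_cases j <;> simp [h1, h1.symm, h2, h2.symm, h3, h3.symm, h4, h4.symm,
      h5, h5.symm, h6, h6.symm, h7, h7.symm, h8, h8.symm, h9, h9.symm, h10, h10.symm]
  obtain ⟨p, hp⟩ := exists_autocorr_viaEmbeddingHom_eq x f (swap (0 : Fin 2) 1)
  obtain ⟨q, hq⟩ := exists_autocorr_viaEmbeddingHom_eq x f (swap (1 : Fin 3) 2)
  obtain ⟨A, hA⟩ := exists_autocorr_viaEmbeddingHom_eq x f (swap (0 : Fin 3) 1 * swap 0 2)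
  obtain ⟨B, hB⟩ := exists_autocorr_viaEmbeddingHom_eq x f (swap (0 : Fin 4) 1 * swap 2 3)
  obtain ⟨C, hC⟩ := exists_autocorr_viaEmbeddingHom_eq x f (swap (1 : Fin 4) 2 * swap 1 3)
  obtain ⟨D, hD⟩ := exists_autocorr_viaEmbeddingHom_eq x f (swap (1 : Fin 5) 2 * swap 3 4)
  obtain ⟨F, hF⟩ := exists_autocorr_viaEmbeddingHom_eq x f
    (swap (0 : Fin 5) 1 * swap 0 2 * swap 0 3 * swap 0 4)
  simp only [map_mul, viaEmbeddingHom_swap] at hp hq hA hB hC hD hF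
  refine ⟨⟨p, q, A, B, C, D, F, fun a h1 => ?_, fun a b h1 h2 h3 => ?_, fun a b h1 h2 h3 => ?_,
    fun a b c h1 h2 h3 h4 h5 h6 => ?_, fun a b c h1 h2 h3 h4 h5 h6 => ?_,
    fun a b c d h1 h2 h3 h4 h5 h6 h7 h8 h9 h10 => ?_,
    fun a b c d h1 h2 h3 h4 h5 h6 h7 h8 h9 h10 => ?_⟩⟩
  · simpa using hp ⟨_, inj2 a h1⟩ rfl
  · simpa using hq ⟨_, inj3 a b h1 h2 h3⟩ rfl
  · simpa using hA ⟨_, inj3 a b h1 h2 h3⟩ rfl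
  · simpa using hB ⟨_, inj4 a b c h1 h2 h3 h4 h5 h6⟩ rfl
  · simpa using hC ⟨_, inj4 a b c h1 h2 h3 h4 h5 h6⟩ rfl
  · simpa using hD ⟨_, inj5 a b c d h1 h2 h3 h4 h5 h6 h7 h8 h9 h10⟩ rfl
  · simpa using hF ⟨_, inj5 a b c d h1 h2 h3 h4 h5 h6 h7 h8 h9 h10⟩ rfl

lemma classSum_quotients_nonneg (x : V) (f : Perm V → ℝ) (v : ClassValues x (autocorr x f))
    {n : ℕ} [NeZero n] {e : Fin n ↪ V} (he : e 0 = x) (L : List (ℤ × Perm (Fin n)))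
    (hL : ∀ p ∈ quotients L, cycleClass p.2 < 6)
    (hrep : ∀ k : Perm (Fin n), classRep (cycleClass k) k) :
    0 ≤ ∑ t ∈ range 6, (classSum (quotients L) t : ℝ) * v.val t := by
  have h := sum_autocorr_nonneg x f (fun i : Fin L.length => (L[i].1 : ℝ))
    (fun i : Fin L.length => Equiv.Perm.viaEmbeddingHom e L[i].2)
  have h2 := sum_mul_comp_eq_sum_fiber (quotients L) cycleClass 6 hL
    (fun k => autocorr x f (Equiv.Perm.viaEmbeddingHom e k)) v.val
    (fun p hp => v.apply_viaEmbeddingHom he (hL p hp) (hrep _))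
  unfold classSum
  rw [← h2]
  convert h using 1
  have h3 : ∀ i : Fin L.length, ∑ j : Fin L.length, (L[i].1 : ℝ) * (L[j].1 : ℝ) * autocorr x f
      ((Equiv.Perm.viaEmbeddingHom e L[i].2)⁻¹ * Equiv.Perm.viaEmbeddingHom e L[j].2) =
      (L.map fun q => (L[i].1 : ℝ) * (q.1 : ℝ) * autocorr x f
        ((Equiv.Perm.viaEmbeddingHom e L[i].2)⁻¹ * Equiv.Perm.viaEmbeddingHom e q.2)).sum :=
    fun i => Fin.sum_univ_fun_getElem L fun q => (L[i].1 : ℝ) * (q.1 : ℝ) * autocorr x f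
        ((Equiv.Perm.viaEmbeddingHom e L[i].2)⁻¹ * Equiv.Perm.viaEmbeddingHom e q.2)
  rw [sum_congr rfl fun i _ => h3 i]
  refine Eq.trans ?_ (Fin.sum_univ_fun_getElem L fun p =>
    (L.map fun q => (p.1 : ℝ) * (q.1 : ℝ) * autocorr x f
      ((Equiv.Perm.viaEmbeddingHom e p.2)⁻¹ * Equiv.Perm.viaEmbeddingHom e q.2)).sum).symm
  rw [← sum_flatMap_map, quotients, List.map_flatMap]
  simp [List.map_map, Function.comp_def]

lemma four_point_inequality (x : V) (f : Perm V → ℝ) (v : ClassValues x (autocorr x f))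
    (h : 4 ≤ Fintype.card V) : 0 ≤ autocorr x f 1 - 3 * v.A + 3 * v.B - v.C := by
  obtain ⟨e, he⟩ := exists_embedding_apply_zero x h
  have h1 := classSum_quotients_nonneg x f v he fourPointVector cycleClass_fourPointVector
    classRep_cycleClass_four
  have h2 := classSum_fourPointVector
  simp only [List.range, List.range.loop, List.map_cons, List.map_nil, List.cons.injEq] at h2
  simp only [sum_range_succ, h2, ClassValues.val] at h1
  norm_num at h1
  linarith

lemma five_point_inequality (x : V) (f : Perm V → ℝ) (v : ClassValues x (autocorr x f))
    (h : 5 ≤ Fintype.card V) : 0 ≤ autocorr x f 1 - 4 * v.A + 4 * v.B - v.D := by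
  obtain ⟨e, he⟩ := exists_embedding_apply_zero x h
  have h1 := classSum_quotients_nonneg x f v he fivePointVector cycleClass_fivePointVector
    classRep_cycleClass_five
  have h2 := classSum_fivePointVector
  simp only [List.range, List.range.loop, List.map_cons, List.map_nil, List.cons.injEq] at h2
  simp only [sum_range_succ, h2, ClassValues.val] at h1
  norm_num at h1
  linarith

end Embeddings

section Octopus

lemma swap_mul_swap_of_ne {V : Type*} [DecidableEq V] {a b c : V} (hac : a ≠ c) (hbc : b ≠ c) :
    swap a b * swap b c = swap a c * swap a b := by
  rw [Equiv.mul_swap_eq_swap_mul, Equiv.swap_apply_right,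
    Equiv.swap_apply_of_ne_of_ne hac.symm hbc.symm]

variable {V : Type*} [Fintype V] [DecidableEq V]

/-- The weights of the octopus centred at `x`, with total weight zero. -/
def octopusWeight (x a : V) : ℝ := if a = x then -((Fintype.card V : ℝ) - 1) else 1

lemma sum_octopusWeight (x : V) {m : ℝ} (hm : (Fintype.card V : ℝ) = m + 1) {F : V → V → ℝ}
    {F₁ : ℝ} (h₁ : ∀ a, F a a = F₁) (hF : ∀ a b, F a b = F b a) :
    ∑ a, ∑ b, octopusWeight x a * octopusWeight x b * F a b =
      (m ^ 2 + m) * F₁ - 2 * m * ∑ a ∈ univ.erase x, F x a +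
        ∑ a ∈ univ.erase x, ∑ b ∈ (univ.erase x).erase a, F a b := by
  have hx : octopusWeight x x = -m := by simp [octopusWeight, hm]
  have hU : ∀ a ∈ univ.erase x, octopusWeight x a = 1 := fun a ha => by
    simp [octopusWeight, ne_of_mem_erase ha]
  have hcard : (#(univ.erase x) : ℝ) = m := by
    rw [cast_card_erase_of_mem (mem_univ x), card_univ, hm]
    ring
  have hin : ∀ a, ∑ b, octopusWeight x a * octopusWeight x b * F a b =
      octopusWeight x a * (-m * F a x + ∑ b ∈ univ.erase x, F a b) := by
    intro a
    rw [← add_sum_erase _ _ (mem_univ x), hx, mul_add, mul_sum]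
    congr 1
    · ring
    · exact sum_congr rfl fun b hb => by rw [hU b hb]; ring
  have hout : ∀ a ∈ univ.erase x,
      octopusWeight x a * (-m * F a x + ∑ b ∈ univ.erase x, F a b) =
        -m * F x a + (F₁ + ∑ b ∈ (univ.erase x).erase a, F a b) := by
    intro a ha
    rw [hU a ha, ← add_sum_erase _ _ ha, h₁, hF a x, one_mul]
  simp only [hin]
  rw [← add_sum_erase _ _ (mem_univ x), hx, h₁, sum_congr rfl hout]
  simp only [sum_add_distrib, sum_const, nsmul_eq_mul, hcard, ← mul_sum]
  ring

lemma star_inequality (x : V) (f : Perm V → ℝ) (v : ClassValues x (autocorr x f)) {m : ℝ}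
    (hm : (Fintype.card V : ℝ) = m + 1) :
    0 ≤ (m ^ 2 + m) * ((m ^ 2 + m) * autocorr x f 1 - 2 * m * (m * v.p) + m * (m - 1) * v.q) -
      2 * m * (m * ((m ^ 2 + m) * v.p - 2 * m * (autocorr x f 1 + (m - 1) * v.A) +
        (2 * (m - 1) * v.A + (m - 1) * (m - 2) * v.B))) +
      m * (m - 1) * ((m ^ 2 + m) * v.q - 2 * m * (2 * v.A + (m - 2) * v.B) +
        (2 * autocorr x f 1 + 4 * (m - 2) * v.C + (m - 2) * (m - 3) * v.D)) := by
  set U := univ.erase x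
  have hcard : (#U : ℝ) = m := by
    rw [cast_card_erase_of_mem (mem_univ x), card_univ, hm]
    ring
  have hU : ∀ a ∈ U, a ≠ x := fun a ha => ne_of_mem_erase ha
  have hinv : ∀ g, autocorr x f g⁻¹ = autocorr x f g := autocorr_inv x f
  have hmul : ∀ a b c d : V, autocorr x f (swap a b * swap c d) =
      autocorr x f (swap c d * swap a b) := by
    intro a b c d
    rw [← hinv, mul_inv_rev, Equiv.swap_inv, Equiv.swap_inv]
  have hA' : ∀ a b, a ≠ x → b ≠ x → a ≠ b → autocorr x f (swap x a * swap a b) = v.A := by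
    intro a b ha hb hab
    rw [swap_mul_swap_of_ne hb.symm hab]
    exact v.hA b a hb ha hab.symm
  have hC' : ∀ a b c, a ≠ x → b ≠ x → c ≠ x → a ≠ b → a ≠ c → b ≠ c →
      autocorr x f (swap a b * swap b c) = v.C := by
    intro a b c ha hb hc hab hac hbc
    rw [swap_mul_swap_of_ne hac hbc]
    exact v.hC a c b ha hc hb hac hab hbc.symm
  have h := sum_autocorr_nonneg x f
    (fun i : V × V => octopusWeight x i.1 * octopusWeight x i.2) (fun i => swap i.1 i.2)
  simp only [Fintype.sum_prod_type, Equiv.swap_inv, mul_assoc (octopusWeight x _ * _),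
    ← mul_sum] at h
  have inner : ∀ g : Perm V,
      ∑ c, ∑ d, octopusWeight x c * octopusWeight x d * autocorr x f (g * swap c d) =
      (m ^ 2 + m) * autocorr x f g - 2 * m * ∑ a ∈ U, autocorr x f (g * swap x a) +
        ∑ a ∈ U, ∑ b ∈ U.erase a, autocorr x f (g * swap a b) := by
    intro g
    exact sum_octopusWeight x hm (F := fun c d => autocorr x f (g * swap c d))
      (fun a => by rw [Equiv.swap_self, ← Equiv.Perm.one_def, mul_one])
      (fun a b => by rw [Equiv.swap_comm])
  simp only [inner] at h
  rw [sum_octopusWeight x hm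
      (F₁ := (m ^ 2 + m) * autocorr x f 1 - 2 * m * ∑ a ∈ U, autocorr x f (swap x a) +
        ∑ a ∈ U, ∑ b ∈ U.erase a, autocorr x f (swap a b))
    (fun a => by simp only [Equiv.swap_self, ← Equiv.Perm.one_def, one_mul])
    (fun a b => by rw [Equiv.swap_comm a b])] at h
  have e1 : ∑ a ∈ U, autocorr x f (swap x a) = m * v.p := by
    rw [sum_congr rfl fun a ha => v.hp a (hU a ha), sum_const, nsmul_eq_mul, hcard]
  have e2 : ∑ a ∈ U, ∑ b ∈ U.erase a, autocorr x f (swap a b) = m * (m - 1) * v.q := by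
    rw [sum_erase_const fun a ha b hb hab => v.hq a b (hU a ha) (hU b hb) hab, hcard]
  have e3 : ∀ a ∈ U, ∑ b ∈ U, autocorr x f (swap x a * swap x b) =
      autocorr x f 1 + (m - 1) * v.A := by
    intro a ha
    rw [sum_eq_one_special ha fun b hb hba => v.hA a b (hU a ha) (hU b hb) hba.symm, hcard,
      Equiv.swap_mul_self]
  have e4 : ∀ a ∈ U, ∑ b ∈ U, ∑ c ∈ U.erase b, autocorr x f (swap x a * swap b c) =
      2 * (m - 1) * v.A + (m - 1) * (m - 2) * v.B := by
    intro a ha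
    rw [sum_erase_eq_one_special ha (A := v.A) (B := v.B), hcard]
    · exact fun b hb hba => hA' a b (hU a ha) (hU b hb) hba.symm
    · intro b hb hba
      rw [Equiv.swap_comm b a]
      exact hA' a b (hU a ha) (hU b hb) hba.symm
    · exact fun b hb c hc hba hca hbc =>
        v.hB a b c (hU a ha) (hU b hb) (hU c hc) hba.symm hca.symm hbc
  have e5 : ∀ a ∈ U, ∀ b ∈ U, a ≠ b → ∑ c ∈ U, autocorr x f (swap a b * swap x c) =
      2 * v.A + (m - 2) * v.B := by
    intro a ha b hb hab
    rw [sum_eq_two_special ha hb hab (A := v.B), hcard, hmul, hA' a b (hU a ha) (hU b hb) hab,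
      hmul, Equiv.swap_comm a b, hA' b a (hU b hb) (hU a ha) hab.symm]
    · ring
    · intro c hc hca hcb
      rw [hmul]
      exact v.hB c a b (hU c hc) (hU a ha) (hU b hb) hca hcb hab
  have e6 : ∀ a ∈ U, ∀ b ∈ U, a ≠ b →
      ∑ c ∈ U, ∑ d ∈ U.erase c, autocorr x f (swap a b * swap c d) =
      2 * autocorr x f 1 + 4 * (m - 2) * v.C + (m - 2) * (m - 3) * v.D := by
    intro a ha b hb hab
    rw [sum_erase_eq_two_special ha hb hab (E := autocorr x f 1) (C := v.C) (D := v.D), hcard]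
    · rw [Equiv.swap_mul_self]
    · rw [Equiv.swap_comm b a, Equiv.swap_mul_self]
    · intro c hc hca hcb
      have h1 := v.hC a b c (hU a ha) (hU b hb) (hU c hc) hab hca.symm hcb.symm
      have h2 := hC' a b c (hU a ha) (hU b hb) (hU c hc) hab hca.symm hcb.symm
      refine ⟨h1, h2, ?_, ?_⟩
      · rwa [Equiv.swap_comm c a]
      · rwa [Equiv.swap_comm c b]
    · exact fun c hc d hd hca hcb hda hdb hcd => v.hD a b c d (hU a ha) (hU b hb) (hU c hc)
        (hU d hd) hab hca.symm hda.symm hcb.symm hdb.symm hcd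
  have e7 : ∑ a ∈ U, ((m ^ 2 + m) * autocorr x f (swap x a) -
      2 * m * ∑ b ∈ U, autocorr x f (swap x a * swap x b) +
      ∑ b ∈ U, ∑ c ∈ U.erase b, autocorr x f (swap x a * swap b c)) =
      m * ((m ^ 2 + m) * v.p - 2 * m * (autocorr x f 1 + (m - 1) * v.A) +
        (2 * (m - 1) * v.A + (m - 1) * (m - 2) * v.B)) := by
    rw [sum_congr rfl fun a ha => by rw [v.hp a (hU a ha), e3 a ha, e4 a ha], sum_const,
      nsmul_eq_mul, hcard]
  have e8 : ∑ a ∈ U, ∑ b ∈ U.erase a, ((m ^ 2 + m) * autocorr x f (swap a b) -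
      2 * m * ∑ c ∈ U, autocorr x f (swap a b * swap x c) +
      ∑ c ∈ U, ∑ d ∈ U.erase c, autocorr x f (swap a b * swap c d)) =
      m * (m - 1) * ((m ^ 2 + m) * v.q - 2 * m * (2 * v.A + (m - 2) * v.B) +
        (2 * autocorr x f 1 + 4 * (m - 2) * v.C + (m - 2) * (m - 3) * v.D)) := by
    rw [sum_erase_const fun a ha b hb hab => by
      rw [v.hq a b (hU a ha) (hU b hb) hab, e5 a ha b hb hab, e6 a ha b hb hab], hcard]
  rwa [e1, e2, e7, e8] at h

lemma octopus_autocorr (x : V) (f : Perm V → ℝ) (v : ClassValues x (autocorr x f)) {m : ℕ}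
    (hm : Fintype.card V = m + 1) (hm0 : 0 < m) :
    0 ≤ ((m : ℝ) ^ 2 + m) * autocorr x f 1 - 2 * m * (m * v.p) + m * ((m : ℝ) - 1) * v.q := by
  have hstar := star_inequality x f v (m := m) (by exact_mod_cast hm)
  have h4 : 0 ≤ (m : ℝ) * (m - 1) * (m - 2) *
      (autocorr x f 1 - 3 * v.A + 3 * v.B - v.C) := by
    rcases lt_or_ge m 3 with h | h
    · interval_cases m <;> norm_num
    · have hm3 : (3 : ℝ) ≤ m := by exact_mod_cast h
      refine mul_nonneg ?_ (four_point_inequality x f v (by omega))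
      exact mul_nonneg (mul_nonneg (by linarith) (by linarith)) (by linarith)
  have h5 : 0 ≤ (m : ℝ) * (m - 1) * (m - 2) * (m - 3) *
      (autocorr x f 1 - 4 * v.A + 4 * v.B - v.D) := by
    rcases lt_or_ge m 4 with h | h
    · interval_cases m <;> norm_num
    · have hm4 : (4 : ℝ) ≤ m := by exact_mod_cast h
      refine mul_nonneg ?_ (five_point_inequality x f v (by omega))
      exact mul_nonneg (mul_nonneg (mul_nonneg (by linarith) (by linarith)) (by linarith))
        (by linarith)
  have hpos : (0 : ℝ) < 2 * ((m : ℝ) ^ 2 + m) := by positivity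
  refine nonneg_of_mul_nonneg_right ?_ hpos
  linear_combination hstar + 4 * h4 + h5

lemma sum_autocorr_swap (x : V) (f : Perm V → ℝ) :
    ∑ y ∈ univ.erase x, autocorr x f (swap x y) =
      #{σ : Perm V | σ x = x} * ∑ y ∈ univ.erase x, ∑ η, f η * f (η * swap x y) := by
  simp only [autocorr_eq_sum_conj]
  rw [sum_comm, ← nsmul_eq_mul, ← sum_const]
  refine sum_congr rfl fun σ hσ => ?_
  have hσ' : σ⁻¹ x = x := by rw [Equiv.Perm.inv_eq_iff_eq, (mem_filter.1 hσ).2]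
  refine sum_equiv σ⁻¹ (fun y => ?_) fun y _ => ?_
  · simp only [mem_erase, mem_univ, and_true, ne_eq]
    rw [← (σ⁻¹).injective.eq_iff (a := y), hσ']
  · have := Equiv.swap_apply_apply σ⁻¹ x y
    rw [hσ', inv_inv] at this
    rw [this]

lemma sum_autocorr_swap_erase (x : V) (f : Perm V → ℝ) :
    ∑ y ∈ univ.erase x, ∑ z ∈ univ.erase x, autocorr x f (swap y z) =
      #{σ : Perm V | σ x = x} *
        ∑ y ∈ univ.erase x, ∑ z ∈ univ.erase x, ∑ η, f η * f (η * swap y z) := by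
  simp only [autocorr_eq_sum_conj]
  rw [← sum_product' _ _ fun y z => ∑ σ : Perm V with σ x = x,
      ∑ η, f η * f (η * (σ⁻¹ * swap y z * σ)),
    ← sum_product' _ _ fun y z => ∑ η, f η * f (η * swap y z),
    sum_comm, ← nsmul_eq_mul, ← sum_const]
  refine sum_congr rfl fun σ hσ => ?_
  have hσ' : σ⁻¹ x = x := by rw [Equiv.Perm.inv_eq_iff_eq, (mem_filter.1 hσ).2]
  refine sum_equiv ((σ⁻¹).prodCongr σ⁻¹) (fun y => ?_) fun y _ => ?_
  · simp only [mem_product, mem_erase, mem_univ, and_true, ne_eq, Equiv.prodCongr_apply, Prod.map]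
    rw [← (σ⁻¹).injective.eq_iff (a := y.1), ← (σ⁻¹).injective.eq_iff (a := y.2), hσ']
  · have := Equiv.swap_apply_apply σ⁻¹ y.1 y.2
    rw [inv_inv] at this
    simp only [Equiv.prodCongr_apply, Prod.map, this]

lemma permExp_sq_sub (f : Perm V → ℝ) (g : Perm V) :
    permExp (fun η => (f (η * g) - f η) ^ 2) =
      2 * (∑ η, f η * f η - ∑ η, f η * f (η * g)) / Fintype.card (Perm V) := by
  have h : ∑ η, f (η * g) * f (η * g) = ∑ η, f η * f η :=
    Equiv.sum_comp (Equiv.mulRight g) fun η => f η * f η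
  have h2 : ∀ η, (f (η * g) - f η) ^ 2 =
      f (η * g) * f (η * g) + f η * f η - 2 * (f η * f (η * g)) := fun η => by ring
  simp only [permExp, h2, sum_sub_distrib, sum_add_distrib, h, ← mul_sum]
  ring

lemma octopus_correlation (x : V) (f : Perm V → ℝ) {m : ℕ} (hm : Fintype.card V = m + 1)
    (hm0 : 0 < m) :
    0 ≤ (m : ℝ) ^ 2 * ∑ η, f η * f η -
      2 * m * ∑ y ∈ univ.erase x, ∑ η, f η * f (η * swap x y) +
        ∑ y ∈ univ.erase x, ∑ z ∈ univ.erase x, ∑ η, f η * f (η * swap y z) := by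
  obtain ⟨v⟩ := nonempty_classValues x f
  have h := octopus_autocorr x f v hm hm0
  have hcard : (#(univ.erase x) : ℝ) = m := by
    rw [cast_card_erase_of_mem (mem_univ x), card_univ, hm]
    push_cast
    ring
  have h0 : autocorr x f 1 = #{σ : Perm V | σ x = x} * ∑ η, f η * f η := by
    simp [autocorr_eq_sum_conj]
  have h1 := sum_autocorr_swap x f
  rw [sum_congr rfl fun y hy => v.hp y (ne_of_mem_erase hy), sum_const, nsmul_eq_mul, hcard] at h1
  have h2 := sum_autocorr_swap_erase x f
  have h3 : ∀ y ∈ univ.erase x, ∑ z ∈ univ.erase x, autocorr x f (swap y z) =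
      autocorr x f 1 + ((m : ℝ) - 1) * v.q := by
    intro y hy
    rw [sum_eq_one_special hy fun z hz hzy =>
      v.hq y z (ne_of_mem_erase hy) (ne_of_mem_erase hz) hzy.symm, hcard, Equiv.swap_self]
    rfl
  rw [sum_congr rfl h3, sum_const, nsmul_eq_mul, hcard] at h2
  have hpos : (0 : ℝ) < #{σ : Perm V | σ x = x} := by
    exact_mod_cast card_pos.2 ⟨1, by simp⟩
  refine nonneg_of_mul_nonneg_right ?_ hpos
  rw [h1] at h
  linear_combination h + h2 + (m : ℝ) ^ 2 * h0

end Octopus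

theorem octopus_complete_graph {V : Type*} [Fintype V] [DecidableEq V]
    (hcard : 2 ≤ Fintype.card V) (x : V) (f : Equiv.Perm V → ℝ) :
    ∑ y ∈ univ.erase x, permExp (fun η => (f (η * Equiv.swap x y) - f η) ^ 2) ≥
      ((Fintype.card V : ℝ) - 1)⁻¹ *
        ((1 / 2) * ∑ y ∈ univ.erase x, ∑ z ∈ univ.erase x,
          permExp (fun η => (f (η * Equiv.swap y z) - f η) ^ 2)) := by
  obtain ⟨m, hm⟩ : ∃ m, Fintype.card V = m + 1 := ⟨Fintype.card V - 1, by omega⟩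
  have hm0 : 0 < m := by omega
  have hm0' : (0 : ℝ) < m := by exact_mod_cast hm0
  have hm' : (Fintype.card V : ℝ) - 1 = m := by simp [hm]
  have hU : (#(univ.erase x) : ℝ) = m := by
    rw [cast_card_erase_of_mem (mem_univ x), card_univ, hm']
  have hN : (0 : ℝ) < Fintype.card (Perm V) := by exact_mod_cast Fintype.card_pos
  have h := octopus_correlation x f hm hm0
  simp only [permExp_sq_sub, ← sum_div, ← mul_sum, sum_sub_distrib, sum_const, nsmul_eq_mul,
    hU, hm', ge_iff_le]
  rw [inv_mul_le_iff₀ hm0', ← mul_div_assoc, ← mul_div_assoc, div_le_div_iff_of_pos_right hN]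
  linear_combination h
end
end

section
/- Moving particle lemma for the interchange process: on a finite connected weighted graph $(V,c)$, for any $x\neq y$ in $V$ and any $f:S_V\to\mathbb{R}$, $\frac12\,\nu[(f\circ\tau_{xy}-f)^2] \leq R_{\mathrm{eff}}(x,y)\cdot \frac12\sum_{\{z,w\}} c_{zw}\,\nu[(f\circ\tau_{zw}-f)^2]$, where $\nu$ is the uniform measure on the symmetric group $S_V$ and $R_{\mathrm{eff}}$ is the effective resistance of the graph. -/
open Finset

noncomputable section

def elEnergy {V : Type*} [Fintype V] (c : V → V → ℝ) (h : V → ℝ) : ℝ :=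
  (1 / 2) * ∑ z, ∑ w, c z w * (h z - h w) ^ 2

def ceff {V : Type*} [Fintype V] (c : V → V → ℝ) (x y : V) : ℝ :=
  sInf {E : ℝ | ∃ h : V → ℝ, h x = 1 ∧ h y = 0 ∧ elEnergy c h = E}

section Correlation

variable {V : Type*} [Fintype V] [DecidableEq V]

/-- The correlation `∑ η, f η * f (η * g)` of a function on the symmetric group with its
right translate by `g`. -/
def corr (f : Equiv.Perm V → ℝ) (g : Equiv.Perm V) : ℝ := ∑ η, f η * f (η * g)

lemma sum_translate_mul_translate (f : Equiv.Perm V → ℝ) (g h : Equiv.Perm V) :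
    ∑ η, f (η * g) * f (η * h) = corr f (g⁻¹ * h) := by
  unfold corr
  rw [← Equiv.sum_comp (Equiv.mulRight g) fun η => f η * f (η * (g⁻¹ * h))]
  simp [mul_assoc]

lemma corr_inv (f : Equiv.Perm V → ℝ) (g : Equiv.Perm V) : corr f g⁻¹ = corr f g := by
  have h := sum_translate_mul_translate f g 1
  rw [mul_one] at h
  rw [← h, corr]
  simp [mul_comm]

lemma sum_sq_translate_sub (f : Equiv.Perm V → ℝ) (g : Equiv.Perm V) :
    ∑ η, (f (η * g) - f η) ^ 2 = 2 * corr f 1 - 2 * corr f g := by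
  have h1 := sum_translate_mul_translate f g g
  rw [inv_mul_cancel] at h1
  have h2 : corr f 1 = ∑ η, f η * f η := by simp [corr]
  have h3 : ∀ η, (f (η * g) - f η) ^ 2 =
      f (η * g) * f (η * g) + f η * f η - 2 * (f η * f (η * g)) := fun η => by ring
  simp only [h3, sum_sub_distrib, sum_add_distrib, ← mul_sum]
  rw [h1, ← h2, ← corr]
  ring

/-- If the group algebra element with coefficients `a` satisfies `a* a = N a` with `N > 0`,
then it acts as a nonnegative operator. -/
lemma sum_mul_corr_nonneg {G : Type*} [Group G] [Fintype G] (f : Equiv.Perm V → ℝ)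
    (φ : G →* Equiv.Perm V) (a : G → ℤ) (N : ℤ) (hN : 0 < N)
    (ha : ∀ k, ∑ g, a g * a (g * k) = N * a k) :
    0 ≤ ∑ k, (a k : ℝ) * corr f (φ k) := by
  have hsq : (N : ℝ) * ∑ k, (a k : ℝ) * corr f (φ k) =
      ∑ η, (∑ g, (a g : ℝ) * f (η * φ g)) ^ 2 := by
    calc (N : ℝ) * ∑ k, (a k : ℝ) * corr f (φ k)
        = ∑ k, ∑ g, (a g : ℝ) * a (g * k) * corr f (φ k) := by
          rw [mul_sum]
          refine sum_congr rfl fun k _ => ?_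
          rw [← sum_mul, ← mul_assoc]
          congr 1
          exact_mod_cast (ha k).symm
      _ = ∑ g, ∑ h, (a g : ℝ) * a h * corr f ((φ g)⁻¹ * φ h) := by
          rw [sum_comm]
          refine sum_congr rfl fun g _ => ?_
          rw [← Equiv.sum_comp (Equiv.mulLeft g)
            (fun h => (a g : ℝ) * a h * corr f ((φ g)⁻¹ * φ h))]
          simp
      _ = ∑ η, (∑ g, (a g : ℝ) * f (η * φ g)) ^ 2 := by
          simp only [← sum_translate_mul_translate, sq, sum_mul_sum]
          simp only [mul_sum]
          conv_rhs => rw [sum_comm]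
          refine sum_congr rfl fun g _ => ?_
          rw [sum_comm]
          refine sum_congr rfl fun η _ => sum_congr rfl fun h _ => ?_
          ring
  have hpos : (0 : ℝ) < N := by exact_mod_cast hN
  have hnn : 0 ≤ (N : ℝ) * ∑ k, (a k : ℝ) * corr f (φ k) := by
    rw [hsq]; positivity
  exact nonneg_of_mul_nonneg_right hnn hpos

/-- The product of the transpositions of `p.1, p.2.1` and of `p.2.2.1, p.2.2.2`. -/
def swapPair {α : Type*} [DecidableEq α] (p : α × α × α × α) : Equiv.Perm α :=
  Equiv.swap p.1 p.2.1 * Equiv.swap p.2.2.1 p.2.2.2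

/-- The coefficient of `g` in a formal combination of products of two transpositions. -/
def swapPairCoeff {α : Type*} [DecidableEq α] [Fintype α] (L : List (ℤ × α × α × α × α))
    (g : Equiv.Perm α) : ℤ :=
  (L.map fun p => if swapPair p.2 = g then p.1 else 0).sum

lemma sum_swapPairCoeff_mul {α : Type*} [DecidableEq α] [Fintype α] {R : Type*} [CommRing R]
    (L : List (ℤ × α × α × α × α)) (F : Equiv.Perm α → R) :
    ∑ g, (swapPairCoeff L g : R) * F g = (L.map fun p => (p.1 : R) * F (swapPair p.2)).sum := by
  induction L with
  | nil => simp [swapPairCoeff]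
  | cons p L ih =>
    have h : ∀ g, swapPairCoeff (p :: L) g =
        (if swapPair p.2 = g then p.1 else 0) + swapPairCoeff L g := fun g => by
      simp [swapPairCoeff]
    simp [h, add_mul, sum_add_distrib, ih]

lemma viaEmbedding_swap {α β : Type*} [DecidableEq α] [DecidableEq β] (e : α ↪ β) (i j : α) :
    (Equiv.swap i j).viaEmbedding e = Equiv.swap (e i) (e j) := by
  ext b
  by_cases hb : b ∈ Set.range e
  · obtain ⟨k, rfl⟩ := hb
    rw [Equiv.Perm.viaEmbedding_apply, e.injective.map_swap]
  · rw [Equiv.Perm.viaEmbedding_apply_of_notMem _ _ _ hb, Equiv.swap_apply_of_ne_of_ne]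
    · rintro rfl; exact hb ⟨i, rfl⟩
    · rintro rfl; exact hb ⟨j, rfl⟩

lemma viaEmbeddingHom_swapPair {α β : Type*} [DecidableEq α] [DecidableEq β] (e : α ↪ β)
    (p : α × α × α × α) :
    Equiv.Perm.viaEmbeddingHom e (swapPair p) =
      swapPair (e p.1, e p.2.1, e p.2.2.1, e p.2.2.2) := by
  simp only [swapPair, map_mul, Equiv.Perm.viaEmbeddingHom_apply, viaEmbedding_swap]

lemma abs_swapPairCoeff_le {α : Type*} [DecidableEq α] [Fintype α]
    (L : List (ℤ × α × α × α × α)) (g : Equiv.Perm α) :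
    |swapPairCoeff L g| ≤ (L.map fun p => |p.1|).sum := by
  induction L with
  | nil => simp [swapPairCoeff]
  | cons p L ih =>
    simp only [swapPairCoeff, List.map_cons, List.sum_cons] at ih ⊢
    refine (abs_add_le _ _).trans (add_le_add ?_ ih)
    split_ifs <;> simp

/-- An integer in base `B` with digits smaller than `B` in absolute value is zero only if all
its digits are. -/
lemma eq_zero_of_sum_mul_pow_eq_zero {ι : Type*} [Fintype ι] (d : ι → ℤ) (e : ι → ℕ)
    (he : Function.Injective e) (B : ℕ) (hd : ∀ i, |d i| < B)
    (hsum : ∑ i, d i * (B ^ e i : ℕ) = 0) (i : ι) : d i = 0 := by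
  classical
  by_contra hi
  obtain ⟨k, hk, hmin⟩ := exists_min_image (univ.filter fun i => d i ≠ 0) e ⟨i, by simpa using hi⟩
  simp only [mem_filter, mem_univ, true_and] at hk hmin
  have hrest : (B : ℤ) ^ (e k + 1) ∣ ∑ i ∈ univ.erase k, d i * (B ^ e i : ℕ) := by
    refine dvd_sum fun j hj => ?_
    by_cases hj0 : d j = 0
    · simp [hj0]
    have hlt : e k < e j := (hmin j hj0).lt_of_ne (he.ne (ne_of_mem_erase hj).symm)
    exact_mod_cast (pow_dvd_pow (B : ℤ) hlt).mul_left _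
  rw [← add_sum_erase _ _ (mem_univ k)] at hsum
  have hk' : (B : ℤ) ^ (e k + 1) ∣ d k * (B ^ e k : ℕ) :=
    (Int.dvd_iff_dvd_of_dvd_add (hsum ▸ dvd_zero _)).2 hrest
  have hB : (0 : ℤ) < B := (abs_nonneg _).trans_lt (hd k)
  rw [Nat.cast_pow, pow_succ', mul_dvd_mul_iff_right (pow_pos hB _).ne'] at hk'
  exact hk (Int.eq_zero_of_abs_lt_dvd hk' (hd k))

/-- The permutation `g` read as a number in base `n`. -/
def permCode {n : ℕ} (g : Equiv.Perm (Fin n)) : ℕ := finFunctionFinEquiv g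

lemma permCode_injective {n : ℕ} : Function.Injective (permCode (n := n)) := fun _ _ h =>
  DFunLike.coe_injective (finFunctionFinEquiv.injective (Fin.ext h))

lemma list_sum_corr_nonneg {n : ℕ} (f : Equiv.Perm V → ℝ) (e : Fin n ↪ V)
    (L : List (ℤ × Fin n × Fin n × Fin n × Fin n)) (N : ℤ) (hN : 0 < N) (B : ℕ)
    (hB : (L.map fun p => |p.1|).sum * (L.map fun p => |p.1|).sum +
      N * (L.map fun p => |p.1|).sum < B)
    (hL : (L.map fun p => p.1 * (L.map fun q =>
      q.1 * ((B ^ permCode ((swapPair p.2)⁻¹ * swapPair q.2) : ℕ) : ℤ)).sum).sum =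
        N * (L.map fun p => p.1 * ((B ^ permCode (swapPair p.2) : ℕ) : ℤ)).sum) :
    0 ≤ (L.map fun p => (p.1 : ℝ) *
      corr f (swapPair (e p.2.1, e p.2.2.1, e p.2.2.2.1, e p.2.2.2.2))).sum := by
  simp only [← viaEmbeddingHom_swapPair]
  rw [← sum_swapPairCoeff_mul L (fun g => corr f (Equiv.Perm.viaEmbeddingHom e g))]
  refine sum_mul_corr_nonneg f _ _ N hN fun k => sub_eq_zero.1 ?_
  refine eq_zero_of_sum_mul_pow_eq_zero
    (fun k => ∑ g, swapPairCoeff L g * swapPairCoeff L (g * k) - N * swapPairCoeff L k)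
    permCode permCode_injective B (fun k => ?_) ?_ k
  · refine lt_of_le_of_lt ?_ hB
    have h := sum_swapPairCoeff_mul L (fun g => swapPairCoeff L (g * k))
    simp only [Int.cast_id] at h
    have h1 : |∑ g, swapPairCoeff L g * swapPairCoeff L (g * k)| ≤
        (L.map fun p => |p.1|).sum * (L.map fun p => |p.1|).sum := by
      rw [h, ← List.sum_map_mul_right]
      refine (List.le_sum_of_subadditive abs abs_zero.le abs_add_le _).trans ?_
      rw [List.map_map]
      refine List.sum_le_sum fun p _ => ?_
      simp only [Function.comp_apply, abs_mul]
      exact mul_le_mul_of_nonneg_left (abs_swapPairCoeff_le L _) (abs_nonneg _)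
    refine (abs_sub _ _).trans (add_le_add h1 ?_)
    rw [abs_mul, abs_of_pos hN]
    exact mul_le_mul_of_nonneg_left (abs_swapPairCoeff_le L k) hN.le
  · have h1 : ∀ F : Equiv.Perm (Fin n) → ℤ,
        ∑ g, swapPairCoeff L g * F g = (L.map fun p => p.1 * F (swapPair p.2)).sum := fun F => by
      simpa using sum_swapPairCoeff_mul L F
    have h2 : ∀ g, ∑ k, swapPairCoeff L (g * k) * ((B ^ permCode k : ℕ) : ℤ) =
        (L.map fun q => q.1 * ((B ^ permCode (g⁻¹ * swapPair q.2) : ℕ) : ℤ)).sum := fun g => by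
      rw [← h1 fun k => ((B ^ permCode (g⁻¹ * k) : ℕ) : ℤ)]
      refine (Equiv.sum_comp (Equiv.mulLeft g⁻¹) _).symm.trans ?_
      simp
    rw [← sub_eq_zero, ← h1 fun k => ((B ^ permCode k : ℕ) : ℤ)] at hL
    simp only [← h2] at hL
    rw [← h1 fun g => ∑ k, swapPairCoeff L (g * k) * ((B ^ permCode k : ℕ) : ℤ)] at hL
    simp only [sub_mul, sum_sub_distrib, sum_mul]
    rw [← hL, sum_comm]
    simp only [mul_sum, mul_assoc]

end Correlation

section LocalInequalities

/-- Up to scaling, the element of `ℤ[S₄]` projecting onto the vectors fixed by the Klein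
four-group and orthogonal to those fixed by the alternating group. -/
def kleinElement : List (ℤ × Fin 4 × Fin 4 × Fin 4 × Fin 4) :=
  [(2, 0, 0, 0, 0), (2, 0, 1, 2, 3), (2, 0, 2, 1, 3), (2, 0, 3, 1, 2),
  (-1, 0, 1, 1, 2), (-1, 0, 2, 2, 1), (-1, 0, 1, 1, 3), (-1, 0, 3, 3, 1),
  (-1, 0, 2, 2, 3), (-1, 0, 3, 3, 2), (-1, 1, 2, 2, 3), (-1, 1, 3, 3, 2)]

lemma kleinElement_mul_self : (kleinElement.map fun p => p.1 * (kleinElement.map fun q =>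
    q.1 * ((2048 ^ permCode ((swapPair p.2)⁻¹ * swapPair q.2) : ℕ) : ℤ)).sum).sum =
      12 * (kleinElement.map fun p => p.1 * ((2048 ^ permCode (swapPair p.2) : ℕ) : ℤ)).sum := by
  decide +kernel

/-- Up to scaling, the element of `ℤ[S₅]` projecting onto the orthogonal complement, in the
isotypic component of `A₅` of dimension five, of the image of the Klein four-group projection
fixing `0`. -/
def pentaElement : List (ℤ × Fin 5 × Fin 5 × Fin 5 × Fin 5) :=
  [(3, 0, 0, 0, 0), (-1, 1, 2, 3, 4), (-1, 1, 3, 2, 4), (-1, 1, 4, 2, 3),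
  (1, 0, 1, 2, 3), (1, 0, 1, 2, 4), (1, 0, 1, 3, 4), (1, 0, 2, 1, 3),
  (1, 0, 2, 1, 4), (1, 0, 2, 3, 4), (1, 0, 3, 1, 2), (1, 0, 3, 1, 4),
  (1, 0, 3, 2, 4), (1, 0, 4, 1, 2), (1, 0, 4, 1, 3), (1, 0, 4, 2, 3),
  (-1, 0, 1, 1, 2), (-1, 0, 2, 2, 1), (-1, 0, 1, 1, 3), (-1, 0, 3, 3, 1),
  (-1, 0, 1, 1, 4), (-1, 0, 4, 4, 1), (-1, 0, 2, 2, 3), (-1, 0, 3, 3, 2),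
  (-1, 0, 2, 2, 4), (-1, 0, 4, 4, 2), (-1, 0, 3, 3, 4), (-1, 0, 4, 4, 3)]

lemma pentaElement_mul_self : (pentaElement.map fun p => p.1 * (pentaElement.map fun q =>
    q.1 * ((2048 ^ permCode ((swapPair p.2)⁻¹ * swapPair q.2) : ℕ) : ℤ)).sum).sum =
      12 * (pentaElement.map fun p => p.1 * ((2048 ^ permCode (swapPair p.2) : ℕ) : ℤ)).sum := by
  decide +kernel

lemma swapPair_self {α : Type*} [DecidableEq α] (x : α) : swapPair (x, x, x, x) = 1 :=
  Equiv.ext fun _ => by simp [swapPair]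

variable {V : Type*} [Fintype V] [DecidableEq V]

lemma corr_swapPair_comm (f : Equiv.Perm V → ℝ) (a b c d : V) :
    corr f (swapPair (c, d, a, b)) = corr f (swapPair (a, b, c, d)) := by
  rw [← corr_inv]; simp [swapPair]

lemma corr_threeCycle_rotate (f : Equiv.Perm V → ℝ) {a b c : V} (hab : a ≠ b) (hac : a ≠ c)
    (hbc : b ≠ c) :
    corr f (swapPair (b, c, c, a)) = corr f (swapPair (a, b, b, c)) := by
  congr 1
  ext i
  simp only [swapPair, Equiv.Perm.mul_apply, Equiv.swap_apply_def]
  split_ifs <;> simp_all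

lemma corr_threeCycle_swap (f : Equiv.Perm V → ℝ) {a b c : V} (hab : a ≠ b) (hac : a ≠ c)
    (hbc : b ≠ c) :
    corr f (swapPair (a, c, c, b)) = corr f (swapPair (a, b, b, c)) := by
  rw [← corr_threeCycle_rotate f hab hac hbc, ← corr_swapPair_comm]
  simp only [swapPair, Equiv.swap_comm]

/-- The quadratic form of the difference between the projections onto the vectors invariant
under the Klein four-group and the alternating group on `{x, y, z, w}`, up to a factor `12`;
zero if the four points are not distinct. -/
def kleinForm (f : Equiv.Perm V → ℝ) (x y z w : V) : ℝ :=
  if x ≠ y ∧ x ≠ z ∧ x ≠ w ∧ y ≠ z ∧ y ≠ w ∧ z ≠ w then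
    2 * (corr f 1 + corr f (swapPair (x, y, z, w)) + corr f (swapPair (x, z, y, w)) +
      corr f (swapPair (x, w, y, z))) -
    2 * (corr f (swapPair (x, y, y, z)) + corr f (swapPair (x, y, y, w)) +
      corr f (swapPair (x, z, z, w)) + corr f (swapPair (y, z, z, w)))
  else 0

lemma kleinForm_nonneg (f : Equiv.Perm V → ℝ) (x y z w : V) : 0 ≤ kleinForm f x y z w := by
  unfold kleinForm
  split_ifs with h
  · obtain ⟨hxy, hxz, hxw, hyz, hyw, hzw⟩ := h
    have hinj : Function.Injective ![x, y, z, w] := by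
      intro i j hij
      fin_cases i <;> fin_cases j <;> simp_all
    have key := list_sum_corr_nonneg f ⟨_, hinj⟩ kleinElement 12 (by norm_num) 2048
      (by decide +kernel) kleinElement_mul_self
    simp [kleinElement, swapPair_self] at key
    have h1 := corr_threeCycle_swap f hxy hxz hyz
    have h2 := corr_threeCycle_swap f hxy hxw hyw
    have h3 := corr_threeCycle_swap f hxz hxw hzw
    have h4 := corr_threeCycle_swap f hyz hyw hzw
    linarith
  · exact le_rfl

lemma kleinForm_le_sum (f : Equiv.Perm V → ℝ) (v x y z w : V) :
    kleinForm f x y z w ≤ kleinForm f v y z w + kleinForm f x v z w + kleinForm f x y v w +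
      kleinForm f x y z v := by
  have n1 := kleinForm_nonneg f v y z w
  have n2 := kleinForm_nonneg f x v z w
  have n3 := kleinForm_nonneg f x y v w
  have n4 := kleinForm_nonneg f x y z v
  by_cases h : x ≠ y ∧ x ≠ z ∧ x ≠ w ∧ y ≠ z ∧ y ≠ w ∧ z ≠ w
  swap
  · have h0 : kleinForm f x y z w = 0 := by simp only [kleinForm, if_neg h]
    linarith
  by_cases hx : v = x
  · subst hx; linarith
  by_cases hy : v = y
  · subst hy; linarith
  by_cases hz : v = z
  · subst hz; linarith
  by_cases hw : v = w
  · subst hw; linarith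
  clear n1 n2 n3 n4
  obtain ⟨hxy, hxz, hxw, hyz, hyw, hzw⟩ := h
  have hinj : Function.Injective ![v, x, y, z, w] := by
    intro i j hij
    fin_cases i <;> fin_cases j <;> simp_all
  have key := list_sum_corr_nonneg f ⟨_, hinj⟩ pentaElement 12 (by norm_num) 2048
    (by decide +kernel) pentaElement_mul_self
  simp [pentaElement, swapPair_self] at key
  have cyc : ∀ {a b : V}, v ≠ a → v ≠ b → a ≠ b →
      corr f (swapPair (v, b, b, a)) = corr f (swapPair (v, a, a, b)) ∧
      corr f (swapPair (a, v, v, b)) = corr f (swapPair (v, a, a, b)) ∧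
      corr f (swapPair (a, b, b, v)) = corr f (swapPair (v, a, a, b)) := by
    intro a b ha hb hab
    refine ⟨corr_threeCycle_swap f ha hb hab, ?_, corr_threeCycle_rotate f ha hb hab⟩
    rw [← corr_threeCycle_rotate f ha hb hab, corr_threeCycle_swap f hab ha.symm hb.symm]
  have dbl : ∀ a b c : V, corr f (swapPair (a, v, b, c)) = corr f (swapPair (v, a, b, c)) ∧
      corr f (swapPair (b, c, a, v)) = corr f (swapPair (v, a, b, c)) ∧
      corr f (swapPair (b, c, v, a)) = corr f (swapPair (v, a, b, c)) := by
    intro a b c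
    have h1 : swapPair (a, v, b, c) = swapPair (v, a, b, c) := by
      simp only [swapPair, Equiv.swap_comm]
    exact ⟨by rw [h1], by rw [corr_swapPair_comm, h1], by rw [corr_swapPair_comm]⟩
  obtain ⟨a1, -, a3⟩ := cyc hx hy hxy
  obtain ⟨b1, b2, b3⟩ := cyc hx hz hxz
  obtain ⟨c1, c2, -⟩ := cyc hx hw hxw
  obtain ⟨d1, -, d3⟩ := cyc hy hz hyz
  obtain ⟨e1, e2, -⟩ := cyc hy hw hyw
  obtain ⟨g1, -, -⟩ := cyc hz hw hzw
  have hx' := Ne.symm hx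
  have hy' := Ne.symm hy
  have hz' := Ne.symm hz
  simp only [kleinForm, ne_eq, hxy, hxz, hxw, hyz, hyw, hzw, hy, hz, hw, hx', hy', hz',
    not_false_eq_true, and_self, if_true]
  simp only [a1, a3, b1, b2, b3, c1, c2, d1, d3, e1, e2, g1] at key ⊢
  simp only [dbl]
  linarith

end LocalInequalities

section Octopus

variable {V : Type*} [Fintype V]

lemma weighted_sum_comm (c : V → ℝ) (T : V → V → ℝ) :
    ∑ x, c x * ∑ y, c y * T y x = ∑ x, c x * ∑ y, c y * T x y := by
  simp only [mul_sum]
  rw [sum_comm]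
  exact sum_congr rfl fun x _ => sum_congr rfl fun y _ => by ring

def quadSum (c : V → ℝ) (F : V → V → V → V → ℝ) : ℝ :=
  ∑ x, c x * ∑ y, c y * ∑ z, c z * ∑ w, c w * F x y z w

lemma quadSum_swap₁₂ (c : V → ℝ) (F : V → V → V → V → ℝ) :
    quadSum c (fun x y z w => F y x z w) = quadSum c F :=
  weighted_sum_comm c fun x y => ∑ z, c z * ∑ w, c w * F x y z w

lemma quadSum_swap₂₃ (c : V → ℝ) (F : V → V → V → V → ℝ) :
    quadSum c (fun x y z w => F x z y w) = quadSum c F :=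
  sum_congr rfl fun x _ => congrArg _ (weighted_sum_comm c fun y z => ∑ w, c w * F x y z w)

lemma quadSum_swap₃₄ (c : V → ℝ) (F : V → V → V → V → ℝ) :
    quadSum c (fun x y z w => F x y w z) = quadSum c F :=
  sum_congr rfl fun x _ => congrArg _ <| sum_congr rfl fun y _ =>
    congrArg _ (weighted_sum_comm c fun z w => F x y z w)

lemma quadSum_add (c : V → ℝ) (F G : V → V → V → V → ℝ) :
    quadSum c (fun x y z w => F x y z w + G x y z w) = quadSum c F + quadSum c G := by
  simp only [quadSum, mul_add, sum_add_distrib]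

lemma quadSum_sub (c : V → ℝ) (F G : V → V → V → V → ℝ) :
    quadSum c (fun x y z w => F x y z w - G x y z w) = quadSum c F - quadSum c G := by
  simp only [quadSum, mul_sub, sum_sub_distrib]

lemma quadSum_of_sum_eq_zero (c : V → ℝ) (hc : ∑ x, c x = 0) (F : V → V → V → ℝ) :
    quadSum c (fun x y z _ => F x y z) = 0 := by
  simp [quadSum, ← sum_mul, hc]

/-- The sum of `F` over the six ways to split four points into an ordered pair of pairs. -/
lemma quadSum_pairings (c : V → ℝ) (F : V → V → V → V → ℝ) :
    quadSum c (fun x y z w => F x y z w + F z w x y + F x z y w + F y w x z + F x w y z +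
      F y z x w) = 6 * quadSum c F := by
  have h1 : quadSum c (fun x y z w => F x z y w) = quadSum c F := quadSum_swap₂₃ c F
  have h2 : quadSum c (fun x y z w => F x w y z) = quadSum c F :=
    (quadSum_swap₃₄ c fun x y z w => F x z y w).trans h1
  have h3 : quadSum c (fun x y z w => F y w x z) = quadSum c F :=
    (quadSum_swap₁₂ c fun x y z w => F x w y z).trans h2
  have h4 : quadSum c (fun x y z w => F z w x y) = quadSum c F :=
    (quadSum_swap₂₃ c fun x y z w => F y w x z).trans h3
  have h5 : quadSum c (fun x y z w => F y z x w) = quadSum c F :=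
    (quadSum_swap₁₂ c fun x y z w => F x z y w).trans h1
  simp only [quadSum_add, h1, h2, h3, h4, h5]
  ring

/-- The sum of `F` over the four triples among four points. -/
lemma quadSum_triples (c : V → ℝ) (hc : ∑ x, c x = 0) (F : V → V → V → ℝ) :
    quadSum c (fun x y z w => F x y z + F x y w + F x z w + F y z w) = 0 := by
  have h1 : quadSum c (fun x y z _ => F x y z) = 0 := quadSum_of_sum_eq_zero c hc F
  have h2 : quadSum c (fun x y _ w => F x y w) = 0 :=
    (quadSum_swap₃₄ c fun x y z _ => F x y z).trans h1
  have h3 : quadSum c (fun x _ z w => F x z w) = 0 :=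
    (quadSum_swap₂₃ c fun x y _ w => F x y w).trans h2
  have h4 : quadSum c (fun _ y z w => F y z w) = 0 :=
    (quadSum_swap₁₂ c fun x _ z w => F x z w).trans h3
  simp only [quadSum_add, h1, h2, h3, h4]
  ring

variable [DecidableEq V]

lemma sum_sub_ite_mul (a : V → ℝ) (v : V) (F : V → ℝ) :
    ∑ x, (a x - if x = v then ∑ y, a y else 0) * F x = ∑ x, a x * (F x - F v) := by
  simp [sub_mul, mul_sub, sum_sub_distrib, ← sum_mul]

lemma quadSum_kleinForm_nonpos (f : Equiv.Perm V → ℝ) (a : V → ℝ) (ha : ∀ x, 0 ≤ a x) (v : V) :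
    quadSum (fun x => a x - if x = v then ∑ y, a y else 0) (kleinForm f) ≤ 0 := by
  simp only [quadSum, sum_sub_ite_mul]
  simp only [← sum_sub_distrib, ← mul_sub]
  refine sum_nonpos fun x _ => mul_nonpos_of_nonneg_of_nonpos (ha x) ?_
  refine sum_nonpos fun y _ => mul_nonpos_of_nonneg_of_nonpos (ha y) ?_
  refine sum_nonpos fun z _ => mul_nonpos_of_nonneg_of_nonpos (ha z) ?_
  refine sum_nonpos fun w _ => mul_nonpos_of_nonneg_of_nonpos (ha w) ?_
  have h := kleinForm_le_sum f v x y z w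
  have h1 : ∀ a b, kleinForm f v v a b = 0 := fun a b => by simp [kleinForm]
  have h2 : ∀ a b, kleinForm f v a v b = 0 := fun a b => by simp [kleinForm]
  have h3 : ∀ a b, kleinForm f v a b v = 0 := fun a b => by simp [kleinForm]
  have h4 : ∀ a b, kleinForm f a v v b = 0 := fun a b => by simp [kleinForm]
  have h5 : ∀ a b, kleinForm f a v b v = 0 := fun a b => by simp [kleinForm]
  have h6 : ∀ a b, kleinForm f a b v v = 0 := fun a b => by simp [kleinForm]
  simp only [h1, h2, h3, h4, h5, h6]
  linarith

/-- The quadratic form `2 (1 - ρ)` of a three-cycle `ρ` on `{x, y, z}`; zero if the points are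
not distinct. -/
def cycleForm (f : Equiv.Perm V → ℝ) (x y z : V) : ℝ :=
  if x ≠ y ∧ x ≠ z ∧ y ≠ z then 2 * corr f 1 - 2 * corr f (swapPair (x, y, y, z)) else 0

def pairForm (f : Equiv.Perm V → ℝ) (x y z w : V) : ℝ :=
  (if x = y then 1 else 0) * (2 * corr f (Equiv.swap z w) - 2 * corr f 1) -
    corr f (swapPair (x, y, z, w))

lemma pairForm_symmetrize (f : Equiv.Perm V → ℝ) (x y z w : V) :
    pairForm f x y z w + pairForm f z w x y + pairForm f x z y w + pairForm f y w x z +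
      pairForm f x w y z + pairForm f y z x w + kleinForm f x y z w + 6 * corr f 1 =
    cycleForm f x y z + cycleForm f x y w + cycleForm f x z w + cycleForm f y z w := by
  have e0 : corr f (Equiv.refl V) = corr f 1 := rfl
  have e1 : ∀ a c d : V, swapPair (a, a, c, d) = Equiv.swap c d := fun a c d => by
    rw [swapPair, Equiv.swap_self]; rfl
  have e2 : ∀ a c d : V, swapPair (c, d, a, a) = Equiv.swap c d := fun a c d => by
    rw [swapPair, Equiv.swap_self]; rfl
  have e3 : ∀ a b : V, swapPair (a, b, a, b) = 1 := fun a b => by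
    simp [swapPair]
  have e4 : ∀ a b : V, swapPair (a, b, b, a) = 1 := fun a b => by
    rw [← e3 a b]; simp only [swapPair, Equiv.swap_comm]
  obtain ⟨C, hC⟩ : ∃ C : V → V → V → ℝ, ∀ a b c, corr f (swapPair (a, b, b, c)) = C a b c :=
    ⟨_, fun _ _ _ => rfl⟩
  have e5 : ∀ a b c : V, corr f (swapPair (a, b, a, c)) = C b a c := fun a b c => by
    rw [← hC]; simp only [swapPair, Equiv.swap_comm]
  have e6 : ∀ a b c : V, corr f (swapPair (a, b, c, b)) = C a b c := fun a b c => by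
    rw [← hC]; simp only [swapPair, Equiv.swap_comm]
  have e7 : ∀ a b c : V, corr f (swapPair (a, b, c, a)) = C c a b := fun a b c => by
    rw [← hC, corr_swapPair_comm]
  have hcyc : ∀ a b c : V, a ≠ b → a ≠ c → b ≠ c → C a c b = C a b c ∧ C b a c = C a b c ∧
      C b c a = C a b c ∧ C c a b = C a b c ∧ C c b a = C a b c := by
    intro a b c hab hac hbc
    simp only [← hC]
    have h1 := corr_threeCycle_rotate f hab hac hbc
    have h2 := corr_threeCycle_rotate f hbc hab.symm hac.symm
    have h3 := corr_threeCycle_swap f hab hac hbc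
    have h4 := corr_threeCycle_swap f hbc hab.symm hac.symm
    have h5 := corr_threeCycle_swap f hac.symm hbc.symm hab
    exact ⟨h3, h4.trans h1, h1, h2.trans h1, h5.trans (h2.trans h1)⟩
  have hcases : ∀ a b : V, a = b ∨ a ≠ b ∧ b ≠ a := fun a b =>
    (eq_or_ne a b).imp_right fun h => ⟨h, h.symm⟩
  have hp1 := corr_swapPair_comm f x y z w
  have hp2 := corr_swapPair_comm f x z y w
  have hp3 := corr_swapPair_comm f x w y z
  unfold pairForm kleinForm cycleForm
  rcases hcases x y with rfl | ⟨hxy, hyx⟩ <;> rcases hcases x z with rfl | ⟨hxz, hzx⟩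
  · clear hp1 hp2 hp3 hcyc
    rcases hcases x w with rfl | ⟨hxw, hwx⟩ <;> simp [*] <;> ring
  · clear hp1 hp2 hp3
    rcases hcases x w with rfl | ⟨hxw, hwx⟩
    · clear hcyc; simp [*]; ring
    rcases hcases z w with rfl | ⟨hzw, hwz⟩
    · clear hcyc; simp [*]; ring
    obtain ⟨h1, h2, h3, h4, h5⟩ := hcyc x z w hxz hxw hzw
    clear hcyc; simp [*]; ring
  · clear hp1 hp2 hp3
    rcases hcases x w with rfl | ⟨hxw, hwx⟩
    · clear hcyc; simp [*]; ring
    rcases hcases y w with rfl | ⟨hyw, hwy⟩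
    · clear hcyc; simp [*]; ring
    obtain ⟨h1, h2, h3, h4, h5⟩ := hcyc x y w hxy hxw hyw
    clear hcyc; simp [*]; ring
  rcases hcases y z with rfl | ⟨hyz, hzy⟩
  · clear hp1 hp2 hp3
    rcases hcases x w with rfl | ⟨hxw, hwx⟩
    · clear hcyc; simp [*]; ring
    rcases hcases y w with rfl | ⟨hyw, hwy⟩
    · clear hcyc; simp [*]; ring
    obtain ⟨h1, h2, h3, h4, h5⟩ := hcyc x y w hxy hxw hyw
    clear hcyc; simp [*]; ring
  obtain ⟨h1, h2, h3, h4, h5⟩ := hcyc x y z hxy hxz hyz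
  clear hcyc
  rcases hcases x w with rfl | ⟨hxw, hwx⟩
  · clear hp1 hp2 hp3; simp [*]; ring
  rcases hcases y w with rfl | ⟨hyw, hwy⟩
  · clear hp1 hp2 hp3; simp [*]; ring
  rcases hcases z w with rfl | ⟨hzw, hwz⟩
  · clear hp1 hp2 hp3; simp [*]; ring
  clear h1 h2 h3 h4 h5 e0 e1 e2 e3 e4 e5 e6 e7
  simp [*]
  ring

lemma quadSum_corr_swapPair_nonneg (f : Equiv.Perm V → ℝ) (c : V → ℝ) :
    0 ≤ quadSum c (fun x y z w => corr f (swapPair (x, y, z, w))) := by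
  have h : quadSum c (fun x y z w => corr f (swapPair (x, y, z, w))) =
      ∑ η, (∑ x, c x * ∑ y, c y * f (η * Equiv.swap x y)) ^ 2 := by
    have h1 : ∀ x y z w, corr f (swapPair (x, y, z, w)) =
        ∑ η, f (η * Equiv.swap x y) * f (η * Equiv.swap z w) := fun x y z w => by
      rw [sum_translate_mul_translate, Equiv.swap_inv, swapPair]
    have h2 : ∀ (d : V → ℝ) (T : V → Equiv.Perm V → ℝ),
        ∑ x, d x * ∑ η, T x η = ∑ η, ∑ x, d x * T x η := fun d T => by
      rw [sum_comm]; simp only [mul_sum]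
    simp only [quadSum, h1, h2]
    refine sum_congr rfl fun η _ => ?_
    simp only [sq, sum_mul, mul_sum]
    refine sum_congr rfl fun x _ => sum_congr rfl fun y _ => sum_congr rfl fun z _ =>
      sum_congr rfl fun w _ => ?_
    ring
  rw [h]
  positivity

lemma sum_corr_swap_nonneg (f : Equiv.Perm V → ℝ) (a : V → ℝ) (ha : ∀ x, 0 ≤ a x) (v : V) :
    0 ≤ ∑ x, (a x - if x = v then ∑ y, a y else 0) *
      ∑ y, (a y - if y = v then ∑ z, a z else 0) * corr f (Equiv.swap x y) := by
  have hB := quadSum_kleinForm_nonpos f a ha v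
  have hc : ∑ x, (a x - if x = v then ∑ y, a y else 0) = 0 := by simp
  set c : V → ℝ := fun x => a x - if x = v then ∑ y, a y else 0
  change 0 ≤ ∑ x, c x * ∑ y, c y * corr f (Equiv.swap x y)
  change ∑ x, c x = 0 at hc
  have hsplit : ∀ T : V → V → ℝ,
      quadSum c (fun x y z w => (if x = y then 1 else 0) * T z w) =
        (∑ x, c x ^ 2) * ∑ z, c z * ∑ w, c w * T z w := by
    intro T
    simp only [quadSum, mul_left_comm (c _) (ite _ _ _), ← mul_sum]
    simp [sum_mul, sq, mul_assoc]
  have hpair : quadSum c (pairForm f) =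
      2 * ((∑ x, c x ^ 2) * ∑ x, c x * ∑ y, c y * corr f (Equiv.swap x y)) -
        quadSum c (fun x y z w => corr f (swapPair (x, y, z, w))) := by
    unfold pairForm
    rw [quadSum_sub, hsplit fun z w => 2 * corr f (Equiv.swap z w) - 2 * corr f 1]
    simp only [mul_sub, sum_sub_distrib, ← sum_mul, hc, zero_mul, mul_zero, sub_zero,
      mul_left_comm _ (2 : ℝ), ← mul_sum]
  have hsum := quadSum_triples c hc (cycleForm f)
  simp only [← pairForm_symmetrize] at hsum
  rw [quadSum_add, quadSum_add, quadSum_pairings,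
    quadSum_of_sum_eq_zero c hc fun _ _ _ => 6 * corr f 1, hpair] at hsum
  have hP := quadSum_corr_swapPair_nonneg f c
  rcases (sum_nonneg fun x _ => sq_nonneg (c x) : 0 ≤ ∑ x, c x ^ 2).eq_or_lt with h0 | hpos
  · have hz : ∀ x, c x = 0 := fun x => by
      have := (sum_eq_zero_iff_of_nonneg fun x _ => sq_nonneg (c x)).1 h0.symm x (mem_univ x)
      exact pow_eq_zero_iff two_ne_zero |>.1 this
    simp [hz]
  · refine nonneg_of_mul_nonneg_right ?_ hpos
    linarith

/-- The octopus inequality of Caputo, Liggett and Richthammer. -/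
theorem octopus (f : Equiv.Perm V → ℝ) (a : V → ℝ) (ha : ∀ x, 0 ≤ a x) (v : V) :
    (1 / 2) * ∑ x, ∑ y, a x * a y / (∑ z, a z) *
        ∑ η, (f (η * Equiv.swap x y) - f η) ^ 2 ≤
      ∑ x, a x * ∑ η, (f (η * Equiv.swap v x) - f η) ^ 2 := by
  have h := sum_corr_swap_nonneg f a ha v
  simp only [sum_sub_ite_mul, sum_sq_translate_sub, Equiv.swap_self] at h ⊢
  rcases (sum_nonneg fun x _ => ha x : 0 ≤ ∑ x, a x).eq_or_lt with h0 | hpos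
  · have hz : ∀ x, a x = 0 := fun x =>
      (sum_eq_zero_iff_of_nonneg fun x _ => ha x).1 h0.symm x (mem_univ x)
    simp [hz]
  have hv : ∀ x, Equiv.swap x v = Equiv.swap v x := fun x => Equiv.swap_comm x v
  have h1 : corr f (Equiv.refl V) = corr f 1 := rfl
  have hL : (1 / 2) * ∑ x, ∑ y, a x * a y / (∑ z, a z) *
      (2 * corr f 1 - 2 * corr f (Equiv.swap x y)) =
      ((∑ x, a x) ^ 2 * corr f 1 - ∑ x, a x * ∑ y, a y * corr f (Equiv.swap x y)) /
        ∑ x, a x := by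
    have h2 : ∀ x y, a x * a y / (∑ z, a z) * (2 * corr f 1 - 2 * corr f (Equiv.swap x y)) =
        2 / (∑ z, a z) * (a x * (a y * (corr f 1 - corr f (Equiv.swap x y)))) := fun x y => by
      ring
    simp only [h2, ← mul_sum]
    simp only [mul_sub, sum_sub_distrib, ← sum_mul]
    ring
  have hR : ∑ x, a x * (2 * corr f 1 - 2 * corr f (Equiv.swap v x)) =
      2 * (∑ x, a x) * corr f 1 - 2 * ∑ x, a x * corr f (Equiv.swap v x) := by
    simp only [mul_sub, sum_sub_distrib, ← sum_mul, mul_left_comm _ (2 : ℝ), ← mul_sum]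
    ring
  rw [hL, hR, div_le_iff₀ hpos]
  simp only [mul_sub, sum_sub_distrib, ← sum_mul, hv, h1, mul_left_comm _ (∑ x, a x),
    ← mul_sum] at h
  linarith

end Octopus

section EffectiveConductance

variable {V : Type*} [Fintype V]

/-- The Dirichlet form of the conductances `c` evaluated on squared increments `ε`. -/
def dirichletSum (c ε : V → V → ℝ) : ℝ := (1 / 2) * ∑ z, ∑ w, c z w * ε z w

lemma elEnergy_nonneg {c : V → V → ℝ} (hnn : ∀ z w, 0 ≤ c z w) (h : V → ℝ) :
    0 ≤ elEnergy c h := by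
  have : 0 ≤ ∑ z, ∑ w, c z w * (h z - h w) ^ 2 :=
    sum_nonneg fun z _ => sum_nonneg fun w _ => mul_nonneg (hnn z w) (sq_nonneg _)
  unfold elEnergy
  linarith

lemma ceff_le_elEnergy {c : V → V → ℝ} (hnn : ∀ z w, 0 ≤ c z w) {x y : V} {h : V → ℝ}
    (hx : h x = 1) (hy : h y = 0) : ceff c x y ≤ elEnergy c h :=
  csInf_le ⟨0, by rintro _ ⟨h, -, -, rfl⟩; exact elEnergy_nonneg hnn h⟩ ⟨h, hx, hy, rfl⟩

lemma le_ceff {c : V → V → ℝ} {x y : V} (hxy : x ≠ y) {b : ℝ}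
    (hb : ∀ h : V → ℝ, h x = 1 → h y = 0 → b ≤ elEnergy c h) : b ≤ ceff c x y := by
  classical
  refine le_csInf ⟨_, Pi.single x 1, by simp, by simp [hxy.symm], rfl⟩ ?_
  rintro _ ⟨h, hx, hy, rfl⟩
  exact hb h hx hy

lemma mul_sq_le_elEnergy {c : V → V → ℝ} (hnn : ∀ z w, 0 ≤ c z w)
    (hsymm : ∀ z w, c z w = c w z) (h : V → ℝ) (z w : V) :
    c z w * (h z - h w) ^ 2 ≤ elEnergy c h := by
  classical
  rcases eq_or_ne z w with rfl | hzw
  · simpa using elEnergy_nonneg hnn h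
  have hT : ∀ z w, 0 ≤ c z w * (h z - h w) ^ 2 := fun z w => mul_nonneg (hnn z w) (sq_nonneg _)
  have h1 : c z w * (h z - h w) ^ 2 ≤ ∑ w', c z w' * (h z - h w') ^ 2 :=
    single_le_sum (f := fun w' => c z w' * (h z - h w') ^ 2) (fun w' _ => hT z w') (mem_univ w)
  have h2 : c w z * (h w - h z) ^ 2 ≤ ∑ w', c w w' * (h w - h w') ^ 2 :=
    single_le_sum (f := fun w' => c w w' * (h w - h w') ^ 2) (fun w' _ => hT w w') (mem_univ z)
  have h3 : ∑ u ∈ {z, w}, ∑ w', c u w' * (h u - h w') ^ 2 ≤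
      ∑ u, ∑ w', c u w' * (h u - h w') ^ 2 :=
    sum_le_sum_of_subset_of_nonneg (subset_univ _) fun u _ _ => sum_nonneg fun w' _ => hT u w'
  rw [sum_pair hzw] at h3
  have h4 : c w z * (h w - h z) ^ 2 = c z w * (h z - h w) ^ 2 := by rw [hsymm w z]; ring
  unfold elEnergy
  linarith

lemma exists_sq_sub_le_mul_elEnergy {c : V → V → ℝ} (hnn : ∀ z w, 0 ≤ c z w)
    (hsymm : ∀ z w, c z w = c w z) {x y : V}
    (hxy : (SimpleGraph.fromRel fun z w => 0 < c z w).Reachable x y) :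
    ∃ K : ℝ, 0 ≤ K ∧ ∀ h : V → ℝ, (h x - h y) ^ 2 ≤ K * elEnergy c h := by
  obtain ⟨p⟩ := hxy
  induction p with
  | nil => exact ⟨0, le_rfl, fun h => by simp⟩
  | @cons u v w huv _ ih =>
    obtain ⟨K, hK, ih⟩ := ih
    have hc : 0 < c u v := by
      rw [SimpleGraph.fromRel_adj] at huv
      exact huv.2.elim id fun h => hsymm u v ▸ h
    refine ⟨2 * (c u v)⁻¹ + 2 * K, by positivity, fun h => ?_⟩
    have h1 : (h u - h v) ^ 2 ≤ (c u v)⁻¹ * elEnergy c h := by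
      rw [inv_mul_eq_div, le_div_iff₀' hc]
      exact mul_sq_le_elEnergy hnn hsymm h u v
    nlinarith [ih h, sq_nonneg (h u - h v - (h v - h w))]

lemma ceff_pos {c : V → V → ℝ} (hnn : ∀ z w, 0 ≤ c z w) (hsymm : ∀ z w, c z w = c w z) {x y : V}
    (hxy : x ≠ y) (hreach : (SimpleGraph.fromRel fun z w => 0 < c z w).Reachable x y) :
    0 < ceff c x y := by
  obtain ⟨K, hK, hbound⟩ := exists_sq_sub_le_mul_elEnergy hnn hsymm hreach
  have hK' : 0 < K + 1 := by linarith
  refine (inv_pos.2 hK').trans_le (le_ceff hxy fun h hx hy => ?_)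
  have h1 := hbound h
  rw [hx, hy] at h1
  rw [inv_le_iff_one_le_mul₀ hK']
  linarith [elEnergy_nonneg hnn h]

end EffectiveConductance

section StarMesh

variable {V : Type*}

lemma sum_mul_sq_sub_mean [Fintype V] (a h : V → ℝ) (ha : ∀ z, 0 ≤ a z) :
    ∑ w, a w * ((∑ z, a z * h z) / (∑ z, a z) - h w) ^ 2 =
      (1 / 2) * ∑ z, ∑ w, a z * a w / (∑ u, a u) * (h z - h w) ^ 2 := by
  rcases (sum_nonneg fun x _ => ha x : 0 ≤ ∑ x, a x).eq_or_lt with h0 | hpos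
  · have hz : ∀ x, a x = 0 := fun x =>
      (sum_eq_zero_iff_of_nonneg fun x _ => ha x).1 h0.symm x (mem_univ x)
    simp [hz]
  set s := ∑ z, a z with hs
  set m := ∑ z, a z * h z with hm
  have hL : ∀ w, a w * (m / s - h w) ^ 2 =
      (m / s) ^ 2 * a w - 2 * (m / s) * (a w * h w) + a w * h w ^ 2 := fun w => by ring
  have hR : ∀ z w, a z * a w / s * (h z - h w) ^ 2 =
      s⁻¹ * (a z * h z ^ 2 * a w - 2 * (a z * h z * (a w * h w)) + a z * (a w * h w ^ 2)) :=
    fun z w => by ring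
  simp only [hL, hR, sum_add_distrib, sum_sub_distrib, ← mul_sum, ← sum_mul, ← hs, ← hm]
  field_simp
  ring

variable [DecidableEq V]

/-- The conductances from `v` to the other vertices. -/
def starPart (c : V → V → ℝ) (v z : V) : ℝ := if z = v then 0 else c v z

/-- The conductances between vertices other than `v`. -/
def awayPart (c : V → V → ℝ) (v z w : V) : ℝ := if z = v ∨ w = v then 0 else c z w

lemma starPart_nonneg {c : V → V → ℝ} (hnn : ∀ z w, 0 ≤ c z w) (v z : V) :
    0 ≤ starPart c v z := by
  unfold starPart
  split_ifs
  exacts [le_rfl, hnn _ _]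

variable [Fintype V]

/-- The star-mesh transformation removing `v`. -/
def starMesh (c : V → V → ℝ) (v z w : V) : ℝ :=
  awayPart c v z w + starPart c v z * starPart c v w / ∑ u, starPart c v u

lemma starMesh_nonneg {c : V → V → ℝ} (hnn : ∀ z w, 0 ≤ c z w) (v z w : V) :
    0 ≤ starMesh c v z w := by
  have h1 : 0 ≤ awayPart c v z w := by
    unfold awayPart
    split_ifs
    exacts [le_rfl, hnn _ _]
  exact add_nonneg h1 (div_nonneg (mul_nonneg (starPart_nonneg hnn v z) (starPart_nonneg hnn v w))
    (sum_nonneg fun u _ => starPart_nonneg hnn v u))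

lemma starMesh_symm {c : V → V → ℝ} (hsymm : ∀ z w, c z w = c w z) (v z w : V) :
    starMesh c v z w = starMesh c v w z := by
  unfold starMesh awayPart
  simp only [hsymm z w, mul_comm (starPart c v z), or_comm]

lemma starMesh_eq_zero {c : V → V → ℝ} (hsymm : ∀ z w, c z w = c w z) {v z : V}
    (hz : z = v ∨ ∀ w, c z w = 0) (w : V) : starMesh c v z w = 0 := by
  rcases hz with rfl | hz
  · simp [starMesh, awayPart, starPart]
  · simp [starMesh, awayPart, starPart, hz, hsymm v z]

lemma dirichletSum_eq_away_add_star {c ε : V → V → ℝ} (hsymm : ∀ z w, c z w = c w z)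
    (hε : ∀ z w, ε z w = ε w z) (hε0 : ∀ z, ε z z = 0) (v : V) :
    dirichletSum c ε = dirichletSum (awayPart c v) ε + ∑ w, starPart c v w * ε v w := by
  have hpt : ∀ z w, c z w * ε z w = awayPart c v z w * ε z w +
      ((if z = v then starPart c v w * ε v w else 0) +
        if w = v then starPart c v z * ε v z else 0) := by
    intro z w
    by_cases hz : z = v <;> by_cases hw : w = v
    · simp [hz, hw, awayPart, hε0]
    · simp [awayPart, starPart, hz, hw]
    · simp [awayPart, starPart, hz, hw, hsymm z, hε z]
    · simp [awayPart, hz, hw]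
  have h1 : ∑ z, ∑ w, (if z = v then starPart c v w * ε v w else 0) =
      ∑ w, starPart c v w * ε v w := by
    rw [sum_comm]
    simp
  have h2 : ∑ z, ∑ w, (if w = v then starPart c v z * ε v z else 0) =
      ∑ w, starPart c v w * ε v w := by
    simp
  unfold dirichletSum
  simp only [hpt, sum_add_distrib, h1, h2]
  ring

lemma dirichletSum_starMesh (c ε : V → V → ℝ) (v : V) :
    dirichletSum (starMesh c v) ε = dirichletSum (awayPart c v) ε +
      (1 / 2) * ∑ z, ∑ w, starPart c v z * starPart c v w / (∑ u, starPart c v u) * ε z w := by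
  simp only [dirichletSum, starMesh, add_mul, sum_add_distrib]
  ring

lemma ceff_le_ceff_starMesh {c : V → V → ℝ} (hnn : ∀ z w, 0 ≤ c z w)
    (hsymm : ∀ z w, c z w = c w z) {v x y : V} (hxy : x ≠ y) (hx : x ≠ v) (hy : y ≠ v) :
    ceff c x y ≤ ceff (starMesh c v) x y := by
  refine le_ceff hxy fun h h1 h0 => ?_
  set m := (∑ z, starPart c v z * h z) / ∑ z, starPart c v z with hm
  refine (ceff_le_elEnergy hnn (h := Function.update h v m) (by simp [hx, h1])
    (by simp [hy, h0])).trans_eq ?_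
  change dirichletSum c (fun z w => _) = dirichletSum (starMesh c v) (fun z w => _)
  rw [dirichletSum_eq_away_add_star hsymm (fun z w => by ring) (fun z => by simp) v,
    dirichletSum_starMesh, ← sum_mul_sq_sub_mean _ h (starPart_nonneg hnn v)]
  congr 1
  · unfold dirichletSum
    congr 1
    refine sum_congr rfl fun z _ => sum_congr rfl fun w _ => ?_
    rcases eq_or_ne z v with rfl | hz
    · simp [awayPart]
    rcases eq_or_ne w v with rfl | hw
    · simp [awayPart]
    simp [hz, hw]
  · refine sum_congr rfl fun w _ => ?_
    rcases eq_or_ne w v with rfl | hw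
    · simp [starPart]
    simp [hw, hm]

lemma dirichletSum_starMesh_le {c : V → V → ℝ} (hnn : ∀ z w, 0 ≤ c z w)
    (hsymm : ∀ z w, c z w = c w z) (f : Equiv.Perm V → ℝ) (v : V) :
    dirichletSum (starMesh c v) (fun z w => ∑ η, (f (η * Equiv.swap z w) - f η) ^ 2) ≤
      dirichletSum c (fun z w => ∑ η, (f (η * Equiv.swap z w) - f η) ^ 2) := by
  rw [dirichletSum_starMesh, dirichletSum_eq_away_add_star hsymm
    (fun z w => by simp only [Equiv.swap_comm])
    (fun z => by simp [Equiv.swap_self, ← Equiv.Perm.one_def]) v]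
  exact add_le_add_right (octopus f _ (starPart_nonneg hnn v) v) _

lemma ceff_mul_le_dirichletSum {c : V → V → ℝ} (hnn : ∀ z w, 0 ≤ c z w)
    (hsymm : ∀ z w, c z w = c w z) {x y : V} (hxy : x ≠ y) (f : Equiv.Perm V → ℝ)
    (S : Finset V) (hxS : x ∉ S) (hyS : y ∉ S)
    (hS : ∀ z, z ∉ S → z ≠ x → z ≠ y → ∀ w, c z w = 0) :
    ceff c x y * ∑ η, (f (η * Equiv.swap x y) - f η) ^ 2 ≤
      dirichletSum c (fun z w => ∑ η, (f (η * Equiv.swap z w) - f η) ^ 2) := by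
  induction S using Finset.induction_on generalizing c with
  | empty =>
    have hsum : ∀ ε : V → V → ℝ, (∀ z w, ε z w = ε w z) → (∀ z, ε z z = 0) →
        dirichletSum c ε = c x y * ε x y := by
      intro ε hε hε0
      have hpt : ∀ z w, z ≠ y → z ≠ x → awayPart c x z w = 0 := fun z w hzy hzx => by
        simp [awayPart, hS z (by simp) hzx hzy]
      rw [dirichletSum_eq_away_add_star hsymm hε hε0 x]
      have h1 : dirichletSum (awayPart c x) ε = 0 := by
        unfold dirichletSum
        rw [sum_eq_zero, mul_zero]
        refine fun z _ => sum_eq_zero fun w _ => ?_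
        by_cases hzx : z = x
        · simp [awayPart, hzx]
        by_cases hwx : w = x
        · simp [awayPart, hwx]
        by_cases hzy : z = y
        · by_cases hwy : w = y
          · simp [hzy, hwy, hε0]
          · simp [awayPart, hsymm z w, hS w (by simp) hwx hwy]
        · simp [hpt z w hzy hzx]
      rw [h1, zero_add, sum_eq_single_of_mem y (mem_univ y), starPart, if_neg hxy.symm]
      intro w _ hwy
      by_cases hwx : w = x
      · simp [starPart, hwx]
      · simp [starPart, hsymm x w, hS w (by simp) hwx hwy]
    rw [hsum _ (fun z w => by simp only [Equiv.swap_comm])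
      (fun z => by simp [Equiv.swap_self, ← Equiv.Perm.one_def])]
    refine mul_le_mul_of_nonneg_right ?_ (sum_nonneg fun η _ => sq_nonneg _)
    refine (ceff_le_elEnergy hnn (h := Pi.single x 1) (by simp) (by simp [hxy.symm])).trans_eq ?_
    refine (hsum (fun z w => _) (fun z w => by ring) fun z => by simp).trans ?_
    simp [hxy.symm]
  | insert v S hv ih =>
    simp only [mem_insert, not_or] at hxS hyS hS
    refine (mul_le_mul_of_nonneg_right (ceff_le_ceff_starMesh hnn hsymm hxy hxS.1 hyS.1)
      (sum_nonneg fun η _ => sq_nonneg _)).trans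
      ((ih (starMesh_nonneg hnn v) (starMesh_symm hsymm v) hxS.2 hyS.2 ?_).trans
        (dirichletSum_starMesh_le hnn hsymm f v))
    intro z hz hzx hzy w
    refine starMesh_eq_zero hsymm ?_ w
    by_cases hzv : z = v
    · exact Or.inl hzv
    · exact Or.inr (hS z ⟨hzv, hz⟩ hzx hzy)

end StarMesh

theorem moving_particle_lemma_interchange {V : Type*} [Fintype V] [DecidableEq V]
    (c : V → V → ℝ) (hnn : ∀ z w, 0 ≤ c z w) (hsymm : ∀ z w, c z w = c w z)
    (hdiag : ∀ z, c z z = 0)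
    (hconn : (SimpleGraph.fromRel fun z w => 0 < c z w).Connected)
    (x y : V) (hxy : x ≠ y) (f : Equiv.Perm V → ℝ) :
    (1 / 2) * permExp (fun η => (f (η * Equiv.swap x y) - f η) ^ 2) ≤
      (ceff c x y)⁻¹ * ((1 / 2) * ((1 / 2) * ∑ z, ∑ w, c z w *
        permExp (fun η => (f (η * Equiv.swap z w) - f η) ^ 2))) := by
  have hpos := ceff_pos hnn hsymm hxy (hconn.preconnected x y)
  have hmain := ceff_mul_le_dirichletSum hnn hsymm hxy f (univ \ {x, y}) (by simp) (by simp)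
    fun z hz hzx hzy => by simp [hzx, hzy] at hz
  have hcard : (0 : ℝ) < Fintype.card (Equiv.Perm V) := by exact_mod_cast Fintype.card_pos
  unfold dirichletSum at hmain
  rw [inv_mul_eq_div, le_div_iff₀' hpos]
  simp only [permExp, ← mul_div_assoc, ← sum_div]
  rw [div_le_div_iff_of_pos_right hcard]
  linarith
end
end
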